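/- arXiv:math/0109105 — 3 statements merged into one kernel-verified Lean document; each statement's English description precedes it below -/
import Mathlib

section
/- The abelian group Ext(ℚ, ℤ) is uncountable; in fact it has the cardinality of the continuum. -/
open CategoryTheory

/-!
A sequence `v` generating `M` with `vₙ = aₙ vₙ₊₁` and each `vₙ` of infinite order exhibits `M` as
the colimit of `ℤ → ℤ → ⋯` along the multiplications by `a₀, a₁, …`, so the telescope
`eₙ ↦ eₙ - aₙ eₙ₊₁` is a free resolution of `M` of length one. Dualizing it identifies `Ext¹(M, ℤ)`
with `lim¹`, the sequences of integers modulo those of the form `bₙ - aₙ bₙ₊₁`. If `|aₙ| → ∞` and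
`bₙ - aₙ bₙ₊₁` is bounded by `C`, then `b` is bounded too, and `|aₙ| |bₙ₊₁| ≤ |bₙ| + C` forces
`bₙ = 0` for all large `n`. Hence `0`-`1` sequences which differ infinitely often have distinct
classes, and one can choose continuum many which pairwise do so. For `ℚ`, take
`vₙ = 1 / n!` and `aₙ = n + 1`.
-/

section TwoTermResolution

universe v u

variable {C : Type u} [Category.{v} C] [Abelian C]

lemma quasiIsoAt_zero_toSingle₀Equiv_symm_iff (K : ChainComplex C ℕ) {X : C} (φ : K.X 0 ⟶ X)
    (hφ : K.d 1 0 ≫ φ = 0) :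
    QuasiIsoAt ((ChainComplex.toSingle₀Equiv K X).symm ⟨φ, hφ⟩) 0 ↔
      (ShortComplex.mk _ _ hφ).Exact ∧ Epi φ := by
  have hzero : ((ChainComplex.toSingle₀Equiv K X).symm ⟨φ, hφ⟩).f 0 = φ :=
    ChainComplex.toSingle₀Equiv_symm_apply_f_zero φ hφ
  rw [ChainComplex.quasiIsoAt₀_iff,
    ShortComplex.quasiIso_iff_of_zeros' _ (K.shape 0 0 (by simp)) rfl rfl]
  refine ShortComplex.exact_and_epi_g_iff_of_iso
    (ShortComplex.isoMk (Iso.refl _) (Iso.refl _) (Iso.refl _) ?_ ?_)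
  · exact (Category.id_comp _).trans (Category.comp_id _).symm
  · exact (Category.id_comp _).trans (hzero.symm.trans (Category.comp_id _).symm)

variable (S : ShortComplex C)

/-- The complex `⋯ ⟶ 0 ⟶ S.X₁ ⟶ S.X₂`, with `S.X₂` in degree `0`. -/
noncomputable def twoTermComplex : ChainComplex C ℕ :=
  ((ChainComplex.single₀ C).obj S.X₁).augment S.f Limits.zero_comp

lemma twoTermComplex_d_two_one : (twoTermComplex S).d 2 1 = 0 :=
  ChainComplex.augment_d_succ_succ _ _ _ 1 0

lemma isZero_twoTermComplex_X (n : ℕ) : Limits.IsZero ((twoTermComplex S).X (n + 2)) :=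
  HomologicalComplex.isZero_single_obj_X (.down ℕ) 0 S.X₁ (n + 1) n.succ_ne_zero

variable {S}

/-- The projective resolution `0 ⟶ S.X₁ ⟶ S.X₂` of `S.X₃` given by a short exact sequence whose
first two terms are projective. -/
noncomputable def twoTermResolution (hS : S.ShortExact) [Projective S.X₁] [Projective S.X₂] :
    ProjectiveResolution S.X₃ where
  complex := twoTermComplex S
  projective
    | 0 => ‹Projective S.X₂›
    | 1 => ‹Projective S.X₁›
    | n + 2 => (isZero_twoTermComplex_X S n).projective
  π := (ChainComplex.toSingle₀Equiv _ _).symm ⟨S.g, S.zero⟩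
  quasiIso := ⟨fun
    | 0 => (quasiIsoAt_zero_toSingle₀Equiv_symm_iff (twoTermComplex S) S.g S.zero).2
        ⟨hS.exact, hS.epi_g⟩
    | 1 => by
      rw [quasiIsoAt_iff_exactAt' _ _ (ChainComplex.exactAt_succ_single_obj _ _),
        HomologicalComplex.exactAt_iff' _ 2 1 0 (by simp) (by simp)]
      exact (ShortComplex.exact_iff_mono _ (twoTermComplex_d_two_one S)).2 hS.mono_f
    | n + 2 => by
      rw [quasiIsoAt_iff_exactAt' _ _ (ChainComplex.exactAt_succ_single_obj _ _)]
      exact ShortComplex.exact_of_isZero_X₂ _ (isZero_twoTermComplex_X S n)⟩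

/-- For a short exact sequence with projective first two terms, `Ext¹(S.X₃, Y)` as the cokernel of
precomposition with `S.f`. -/
noncomputable def extOneEquivOfShortExact (R : Type*) [Ring R] [Linear R C] [EnoughProjectives C]
    (hS : S.ShortExact) [Projective S.X₁] [Projective S.X₂] (Y : C) :
    ((Ext R C 1).obj (Opposite.op S.X₃)).obj Y ≃ₗ[R]
      (S.X₁ ⟶ Y) ⧸ LinearMap.range (Linear.leftComp R Y S.f) :=
  let K := (twoTermResolution hS).complex.linearYonedaObj R Y
  have hd : K.d 1 2 = 0 := by
    ext x
    exact (congrArg (· ≫ x) (twoTermComplex_d_two_one S)).trans Limits.zero_comp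
  ((twoTermResolution hS).isoExt 1 Y ≪≫ K.homologyIsoSc' 0 1 2 (by simp) (by simp) ≪≫
    (ShortComplex.LeftHomologyData.ofIsColimitCokernelCofork (K.sc' 0 1 2) hd _
      (ModuleCat.cokernelIsColimit _)).homologyIso).toLinearEquiv

end TwoTermResolution

section Modules

/-- The isomorphism of cokernels induced by an isomorphism of linear maps. -/
noncomputable def quotientRangeEquiv {R A B A' B' : Type*} [Ring R]
    [AddCommGroup A] [AddCommGroup B] [AddCommGroup A'] [AddCommGroup B']
    [Module R A] [Module R B] [Module R A'] [Module R B'] {f : A →ₗ[R] B} {f' : A' →ₗ[R] B'}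
    (eA : A ≃ₗ[R] A') (eB : B ≃ₗ[R] B') (h : ∀ x, eB (f x) = f' (eA x)) :
    (B ⧸ LinearMap.range f) ≃ₗ[R] B' ⧸ LinearMap.range f' :=
  Submodule.Quotient.equiv _ _ eB <| by
    have h' : (eB : B →ₗ[R] B') ∘ₗ f = f' ∘ₗ eA := LinearMap.ext h
    rw [← LinearMap.range_comp, h', LinearEquiv.range_comp]

universe u v

variable {R : Type u} [CommRing R] [Small.{v} R] {P Q M : Type v} [AddCommGroup P]
  [AddCommGroup Q] [AddCommGroup M] [Module R P] [Module R Q] [Module R M]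
  [Module.Projective R P] [Module.Projective R Q] {f : P →ₗ[R] Q} {g : Q →ₗ[R] M}

/-- `Ext¹(M, N)` as the cokernel of the transpose of `f`, for a projective resolution
`0 → P → Q → M → 0` with differential `f`. -/
noncomputable def extOneEquivOfExact (hf : Function.Injective f) (hfg : Function.Exact f g)
    (hg : Function.Surjective g) (N : Type v) [AddCommGroup N] [Module R N] :
    ((Ext R (ModuleCat.{v} R) 1).obj (Opposite.op (ModuleCat.of R M))).obj (ModuleCat.of R N)
      ≃ₗ[R] (P →ₗ[R] N) ⧸ LinearMap.range (LinearMap.lcomp R N f) :=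
  let S := ShortComplex.moduleCatMk f g hfg.linearMap_comp_eq_zero
  have hS : S.ShortExact := ModuleCat.shortComplex_shortExact S hfg hf hg
  have : Projective S.X₁ := (ModuleCat.of R P).projective_of_categoryTheory_projective
  have : Projective S.X₂ := (ModuleCat.of R Q).projective_of_categoryTheory_projective
  extOneEquivOfShortExact R hS (ModuleCat.of R N) ≪≫ₗ
    quotientRangeEquiv ModuleCat.homLinearEquiv ModuleCat.homLinearEquiv fun _ => rfl

end Modules

section Telescope

lemma exists_smul_eq_of_mem_span_range {R M : Type*} [Semiring R] [AddCommMonoid M] [Module R M]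
    {a : ℕ → R} {v : ℕ → M} (hv : ∀ n, v n = a n • v (n + 1)) {x : M}
    (hx : x ∈ Submodule.span R (Set.range v)) : ∃ (n : ℕ) (r : R), r • v n = x := by
  have hmono : Monotone fun n => Submodule.span R {v n} := monotone_nat_of_le_succ fun n =>
    (Submodule.span_singleton_le_iff_mem _ _).2
      (Submodule.mem_span_singleton.2 ⟨a n, (hv n).symm⟩)
  rw [Submodule.span_range_eq_iSup, Submodule.mem_iSup_of_directed _ hmono.directed_le] at hx
  simpa only [Submodule.mem_span_singleton] using hx

variable {R : Type*} [CommRing R] {M : Type*} [AddCommGroup M] [Module R M]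

/-- Milnor's map `b ↦ (bₙ - aₙ bₙ₊₁)ₙ`, whose kernel and cokernel are `lim` and `lim¹` of the tower
`M ← M ← M ← ⋯` with transition maps the multiplications by `a₀, a₁, …`. -/
def milnorMap (a : ℕ → R) (M : Type*) [AddCommGroup M] [Module R M] : (ℕ → M) →ₗ[R] (ℕ → M) where
  toFun b n := b n - a n • b (n + 1)
  map_add' b c := by ext n; simp only [Pi.add_apply, smul_add]; abel
  map_smul' r b := by ext n; simp only [Pi.smul_apply, RingHom.id_apply, smul_sub, smul_comm r]

lemma milnorMap_apply (a : ℕ → R) (b : ℕ → M) (n : ℕ) :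
    milnorMap a M b n = b n - a n • b (n + 1) := rfl

/-- The telescope map `eₙ ↦ eₙ - aₙ eₙ₊₁`, whose cokernel is the colimit of
`R → R → R → ⋯` with transition maps the multiplications by `a₀, a₁, …`. -/
noncomputable def telescopeMap (a : ℕ → R) : (ℕ →₀ R) →ₗ[R] (ℕ →₀ R) :=
  Finsupp.linearCombination R fun n => Finsupp.single n 1 - a n • Finsupp.single (n + 1) 1

variable (a : ℕ → R)

lemma telescopeMap_single (n : ℕ) (r : R) :
    telescopeMap a (Finsupp.single n r) =
      r • (Finsupp.single n 1 - a n • Finsupp.single (n + 1) 1) :=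
  Finsupp.linearCombination_single ..

lemma telescopeMap_apply_zero (c : ℕ →₀ R) : telescopeMap a c 0 = c 0 := by
  induction c using Finsupp.induction_linear with
  | zero => simp
  | add c d hc hd => simp [hc, hd]
  | single n r => simp [telescopeMap_single, Finsupp.single_apply]

lemma telescopeMap_apply_succ (c : ℕ →₀ R) (n : ℕ) :
    telescopeMap a c (n + 1) = c (n + 1) - a n * c n := by
  induction c using Finsupp.induction_linear with
  | zero => simp
  | add c d hc hd => simp only [map_add, Finsupp.add_apply, hc, hd]; ring
  | single m r =>
    by_cases h : m = n <;> simp [telescopeMap_single, Finsupp.single_apply, h, mul_comm]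

lemma telescopeMap_injective : Function.Injective (telescopeMap a) := by
  refine (injective_iff_map_eq_zero _).2 fun c hc => Finsupp.ext fun n => ?_
  induction n with
  | zero => simpa [hc] using (telescopeMap_apply_zero a c).symm
  | succ n ih => simpa [hc, ih] using (telescopeMap_apply_succ a c n).symm

lemma exists_sub_single_mem_range_telescopeMap (c : ℕ →₀ R) :
    ∃ (n : ℕ) (r : R), c - Finsupp.single n r ∈ LinearMap.range (telescopeMap a) := by
  let q := (LinearMap.range (telescopeMap a)).mkQ
  have hq (n : ℕ) : q (Finsupp.single n 1) = a n • q (Finsupp.single (n + 1) 1) := by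
    rw [← map_smul]
    refine (Submodule.Quotient.eq _).2 ⟨Finsupp.single n 1, ?_⟩
    rw [telescopeMap_single, one_smul]
  have hspan : q c ∈ Submodule.span R (Set.range fun n => q (Finsupp.single n 1)) := by
    rw [← Finsupp.range_linearCombination]
    refine ⟨c, (Finsupp.apply_linearCombination R q _ c).symm.trans ?_⟩
    simp [Finsupp.linearCombination_apply]
  obtain ⟨n, r, hr⟩ := exists_smul_eq_of_mem_span_range hq hspan
  refine ⟨n, r, (Submodule.Quotient.eq _).1 (hr.symm.trans ?_)⟩
  rw [← map_smul, Finsupp.smul_single_one]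
  rfl

variable {a}

lemma exact_telescopeMap_linearCombination {v : ℕ → M} (hv : ∀ n, v n = a n • v (n + 1))
    (hfree : ∀ (n : ℕ) (r : R), r • v n = 0 → r = 0) :
    Function.Exact (telescopeMap a) (Finsupp.linearCombination R v) := by
  have hcomp : Finsupp.linearCombination R v ∘ₗ telescopeMap a = 0 := by
    ext n
    simp [telescopeMap_single, ← hv]
  refine LinearMap.exact_of_comp_eq_zero_of_ker_le_range hcomp fun c hc => ?_
  obtain ⟨n, r, x, hx⟩ := exists_sub_single_mem_range_telescopeMap a c
  have hr : r • v n = 0 := by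
    have := LinearMap.congr_fun hcomp x
    simpa [hx, LinearMap.mem_ker.1 hc] using this
  exact ⟨x, by simpa [hfree n r hr] using hx⟩

end Telescope

section ExtTelescope

universe u

variable {R M : Type u} [CommRing R] [AddCommGroup M] [Module R M] {a : ℕ → R} {v : ℕ → M}

/-- `Ext¹(M, N)` as a `lim¹`, for `M` the colimit of `R → R → R → ⋯` with transition maps the
multiplications by `a₀, a₁, …`; the generator of the `n`-th copy of `R` maps to `v n`. -/
noncomputable def extOneEquivQuotientMilnorMap (hv : ∀ n, v n = a n • v (n + 1))
    (hfree : ∀ (n : ℕ) (r : R), r • v n = 0 → r = 0)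
    (hspan : Submodule.span R (Set.range v) = ⊤) (N : Type u) [AddCommGroup N] [Module R N] :
    ((Ext R (ModuleCat.{u} R) 1).obj (Opposite.op (ModuleCat.of R M))).obj (ModuleCat.of R N)
      ≃ₗ[R] (ℕ → N) ⧸ LinearMap.range (milnorMap a N) :=
  have hsurj : Function.Surjective (Finsupp.linearCombination R v) := by
    rw [← LinearMap.range_eq_top, Finsupp.range_linearCombination, hspan]
  extOneEquivOfExact (telescopeMap_injective a) (exact_telescopeMap_linearCombination hv hfree)
      hsurj N ≪≫ₗ
    quotientRangeEquiv (Finsupp.llift N R R ℕ).symm (Finsupp.llift N R R ℕ).symm fun φ => by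
      ext n
      simp [telescopeMap_single, milnorMap_apply, -Finsupp.smul_single]

end ExtTelescope

section Cardinality

open Filter Cardinal

variable {a : ℕ → ℤ}

lemma eventually_eq_zero_of_abs_milnorMap_le (ha : Tendsto (fun n => |a n|) atTop atTop)
    {b : ℕ → ℤ} {C : ℤ} (hC : ∀ n, |milnorMap a ℤ b n| ≤ C) : ∀ᶠ n in atTop, b n = 0 := by
  have hstep (n : ℕ) : |a n| * |b (n + 1)| ≤ |b n| + C := by
    have hdiff : |b n - a n * b (n + 1)| ≤ C := hC n
    have htri := abs_sub_abs_le_abs_sub (a n * b (n + 1)) (b n)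
    rw [abs_sub_comm, abs_mul] at htri
    linarith
  obtain ⟨N, hN⟩ := eventually_atTop.1 (ha.eventually_ge_atTop 2)
  have hbound (n : ℕ) (hn : N ≤ n) : |b n| ≤ |b N| + C := by
    induction n, hn using Nat.le_induction with
    | base => linarith [(abs_nonneg _).trans (hC 0)]
    | succ n hn ih =>
      have hdouble : 2 * |b (n + 1)| ≤ |a n| * |b (n + 1)| :=
        mul_le_mul_of_nonneg_right (hN n hn) (abs_nonneg _)
      linarith [hstep n, abs_nonneg (b N)]
  rw [← map_add_atTop_eq_nat 1, eventually_map]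
  filter_upwards [ha.eventually_gt_atTop (|b N| + 2 * C), eventually_ge_atTop N] with n han hn
  by_contra hne
  have hle : |a n| ≤ |a n| * |b (n + 1)| :=
    le_mul_of_one_le_right (abs_nonneg _) (Int.one_le_abs hne)
  linarith [hstep n, hbound n hn]

lemma eventually_eq_zero_of_mem_range_milnorMap (ha : Tendsto (fun n => |a n|) atTop atTop)
    {d : ℕ → ℤ} (hd : d ∈ LinearMap.range (milnorMap a ℤ)) {C : ℤ} (hC : ∀ n, |d n| ≤ C) :
    ∀ᶠ n in atTop, d n = 0 := by
  obtain ⟨b, rfl⟩ := hd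
  have hb := eventually_eq_zero_of_abs_milnorMap_le ha hC
  filter_upwards [hb, (tendsto_add_atTop_nat 1).eventually hb] with n hn hn'
  simp [milnorMap_apply, hn, hn']

/-- The indicator function of `x`, with each value repeated infinitely often, so that distinct sets
yield sequences which differ infinitely often. -/
noncomputable def repeatedIndicator (x : Set ℕ) (n : ℕ) : ℤ :=
  x.indicator 1 n.unpair.1

lemma eq_of_repeatedIndicator_eventuallyEq {x y : Set ℕ}
    (h : repeatedIndicator x =ᶠ[atTop] repeatedIndicator y) : x = y := by
  obtain ⟨N, hN⟩ := eventually_atTop.1 h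
  refine Set.indicator_one_inj ℤ (funext fun i => ?_)
  simpa [repeatedIndicator] using hN (Nat.pair i N) (Nat.right_le_pair i N)

lemma abs_repeatedIndicator_sub_le (x y : Set ℕ) (n : ℕ) :
    |repeatedIndicator x n - repeatedIndicator y n| ≤ 1 := by
  classical
  simp only [repeatedIndicator, Set.indicator_apply, Pi.one_apply]
  split_ifs <;> simp

lemma mk_quotient_range_milnorMap (ha : Tendsto (fun n => |a n|) atTop atTop) :
    #((ℕ → ℤ) ⧸ LinearMap.range (milnorMap a ℤ)) = 𝔠 := by
  have hinj : Function.Injective fun x : Set ℕ =>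
      (LinearMap.range (milnorMap a ℤ)).mkQ (repeatedIndicator x) := fun x y hxy => by
    have hmem := (Submodule.Quotient.eq _).1 hxy
    refine eq_of_repeatedIndicator_eventuallyEq ?_
    filter_upwards [eventually_eq_zero_of_mem_range_milnorMap ha hmem
      (abs_repeatedIndicator_sub_le x y)] with n hn
    exact sub_eq_zero.1 hn
  refine le_antisymm ?_ (by simpa using mk_le_of_injective hinj)
  simpa using mk_le_of_surjective (LinearMap.range (milnorMap a ℤ)).mkQ_surjective

theorem stmt0_general {M : Type} [AddCommGroup M] (ha : Tendsto (fun n => |a n|) atTop atTop)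
    {v : ℕ → M} (hv : ∀ n, v n = a n • v (n + 1)) (hfree : ∀ (n : ℕ) (r : ℤ), r • v n = 0 → r = 0)
    (hspan : Submodule.span ℤ (Set.range v) = ⊤) :
    ¬ Countable (((Ext ℤ (ModuleCat ℤ) 1).obj
        (Opposite.op (ModuleCat.of ℤ M))).obj (ModuleCat.of ℤ ℤ)) ∧
    #(((Ext ℤ (ModuleCat ℤ) 1).obj
        (Opposite.op (ModuleCat.of ℤ M))).obj (ModuleCat.of ℤ ℤ)) = 𝔠 := by
  have hcard := (mk_congr (extOneEquivQuotientMilnorMap hv hfree hspan ℤ).toEquiv).trans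
    (mk_quotient_range_milnorMap ha)
  exact ⟨fun hcount => aleph0_lt_continuum.not_ge (hcard.ge.trans (mk_le_aleph0_iff.2 hcount)),
    hcard⟩

end Cardinality

lemma tendsto_abs_natCast_add_one_atTop :
    Filter.Tendsto (fun n : ℕ => |(n : ℤ) + 1|) Filter.atTop Filter.atTop :=
  Filter.tendsto_abs_atTop_atTop.comp
    (Filter.tendsto_atTop_add_const_right _ 1 tendsto_natCast_atTop_atTop)

lemma inv_factorial_eq_smul (n : ℕ) :
    (n.factorial : ℚ)⁻¹ = ((n : ℤ) + 1) • ((n + 1).factorial : ℚ)⁻¹ := by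
  rw [Nat.factorial_succ, zsmul_eq_mul]
  push_cast
  field_simp

lemma span_range_inv_factorial :
    Submodule.span ℤ (Set.range fun n : ℕ => (n.factorial : ℚ)⁻¹) = ⊤ := by
  refine Submodule.eq_top_iff'.2 fun x => ?_
  have hx : x = (x.num * (x.den - 1).factorial) • (x.den.factorial : ℚ)⁻¹ := by
    have hfac : (x.den : ℚ) * (x.den - 1).factorial = x.den.factorial := by
      exact_mod_cast Nat.mul_factorial_pred x.den_ne_zero
    have hne : ((x.den - 1).factorial : ℚ) ≠ 0 := by positivity
    rw [← hfac, zsmul_eq_mul, ← div_eq_mul_inv]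
    push_cast
    rw [mul_div_mul_right _ _ hne, Rat.num_div_den]
  rw [hx]
  exact Submodule.smul_mem _ _ (Submodule.subset_span ⟨x.den, rfl⟩)

/-- The abelian group `Ext¹_ℤ(ℚ, ℤ)` (in the category of abelian groups, identified with
`ℤ`-modules) is uncountable; in fact it has the cardinality of the continuum. -/
theorem stmt0 :
    ¬ Countable (((Ext ℤ (ModuleCat ℤ) 1).obj
        (Opposite.op (ModuleCat.of ℤ ℚ))).obj (ModuleCat.of ℤ ℤ)) ∧
    Cardinal.mk (((Ext ℤ (ModuleCat ℤ) 1).obj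
        (Opposite.op (ModuleCat.of ℤ ℚ))).obj (ModuleCat.of ℤ ℤ)) = Cardinal.continuum :=
  stmt0_general tendsto_abs_natCast_add_one_atTop inv_factorial_eq_smul
    (by simp [Nat.factorial_ne_zero]) span_range_inv_factorial
end

section
/- The abelian group Ext(ℚ, ℤ ⊕ ⋯ ⊕ ℤ) (with finitely many summands, at least one) has the cardinality of the continuum. -/
open CategoryTheory

/-!
If `A` is generated by torsion-free elements `q₀, q₁, …` with `qₖ = aₖ qₖ₊₁`, the relations
`eₖ - aₖ eₖ₊₁` resolve `A` by free modules, so `Ext¹(A, M)` is the cokernel of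
`(xₖ) ↦ (xₖ - aₖ xₖ₊₁)` on sequences in `M`. For `ℚ` take `qₖ = 1 / (k + 1)!`.

When all `|aₖ| ≥ 2`, an integer sequence with `x₀ = 0` and `|xₖ - aₖ xₖ₊₁| ≤ 1` for all `k`
vanishes. Hence two sequences of bits whose difference is `(xₖ - aₖ xₖ₊₁)` are equal as soon as
`x₀ = 0`, so every class in the cokernel contains only countably many of the `2 ^ ℵ₀` sequences
of bits.
-/

open Cardinal Opposite

section Ext

universe w

variable {R C : Type*} [Ring R] [Category* C] [Abelian C] [Linear R C] [HasExt.{w} C]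
  {X Y : C}

lemma smul_extMk (P : ProjectiveResolution X) {n m : ℕ} (hm : n + 1 = m)
    (f : P.complex.X n ⟶ Y) (hf : P.complex.d m n ≫ f = 0) (r : R) :
    r • P.extMk f m hm hf =
      P.extMk (r • f) m hm (by rw [Linear.comp_smul, hf, smul_zero]) := by
  rw [Abelian.Ext.smul_eq_comp_mk₀, P.extMk_comp_mk₀]
  congr 1
  rw [Linear.comp_smul, Category.comp_id]

variable (R)

/-- The short complex `Hom(Pₙ, Y) ⟶ Hom(Pₙ₊₁, Y) ⟶ Hom(Pₙ₊₂, Y)`, whose homology is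
`Extⁿ⁺¹(X, Y)`. -/
noncomputable abbrev homShortComplex (P : ProjectiveResolution X) (Y : C) (n : ℕ) :
    ShortComplex (ModuleCat R) :=
  (P.complex.linearYonedaObj R Y).sc' n (n + 1) (n + 2)

/-- The map sending a cocycle `Pₙ₊₁ ⟶ Y` to its class in `Abelian.Ext X Y (n + 1)`. -/
noncomputable def extMkLinearMap (P : ProjectiveResolution X) (Y : C) (n : ℕ) :
    LinearMap.ker (homShortComplex R P Y n).g.hom →ₗ[R] Abelian.Ext X Y (n + 1) where
  toFun f := P.extMk f.1 (n + 2) rfl f.2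
  map_add' f g := (P.add_extMk f.1 g.1 (n + 2) rfl f.2 g.2).symm
  map_smul' r f := (smul_extMk P rfl f.1 f.2 r).symm

lemma extMkLinearMap_surjective (P : ProjectiveResolution X) (Y : C) (n : ℕ) :
    Function.Surjective (extMkLinearMap R P Y n) := fun x =>
  let ⟨f, hf, hx⟩ := P.extMk_surjective x (n + 2) rfl
  ⟨⟨f, hf⟩, hx⟩

lemma exact_moduleCatToCycles_extMkLinearMap (P : ProjectiveResolution X) (Y : C) (n : ℕ) :
    Function.Exact (homShortComplex R P Y n).moduleCatToCycles (extMkLinearMap R P Y n) := fun f =>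
  (P.extMk_eq_zero_iff f.1 (n + 2) rfl f.2 n rfl).trans
    (exists_congr fun g => (Subtype.ext_iff
      (a1 := (homShortComplex R P Y n).moduleCatToCycles g) (a2 := f)).symm)

/-- The `Ext` modules defined by deriving the functor `Hom(-, Y)` agree with those defined by
morphisms in the derived category. -/
noncomputable def extSuccLinearEquiv [EnoughProjectives C] (X Y : C) (n : ℕ) :
    ((Ext R C (n + 1)).obj (op X)).obj Y ≃ₗ[R] Abelian.Ext X Y (n + 1) :=
  letI P := ProjectiveResolution.of X
  letI K := P.complex.linearYonedaObj R Y
  (P.isoExt (n + 1) Y ≪≫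
    ShortComplex.homologyMapIso (K.isoSc' n (n + 1) (n + 2) (by simp) (by simp)) ≪≫
    (homShortComplex R P Y n).moduleCatHomologyIso).toLinearEquiv ≪≫ₗ
    (exact_moduleCatToCycles_extMkLinearMap R P Y n).linearEquivOfSurjective
      (extMkLinearMap_surjective R P Y n)

end Ext

section ShortExact

universe w

variable (R : Type*) {C : Type*} [CommRing R] [Category* C] [Abelian C] [Linear R C]
  [HasExt.{w} C] {S : ShortComplex C}

/-- The connecting homomorphism `Hom(X₁, Y) → Ext¹(X₃, Y)` of a short exact sequence. -/
noncomputable def connectingHom (hS : S.ShortExact) (Y : C) :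
    (S.X₁ ⟶ Y) →ₗ[R] Abelian.Ext S.X₃ Y 1 :=
  hS.extClass.precompOfLinear R Y (add_zero 1) ∘ₗ Abelian.Ext.linearEquiv₀.symm.toLinearMap

lemma connectingHom_apply (hS : S.ShortExact) {Y : C} (f : S.X₁ ⟶ Y) :
    connectingHom R hS Y f = hS.extClass.comp (.mk₀ f) (add_zero 1) := rfl

lemma connectingHom_surjective (hS : S.ShortExact) [Projective S.X₂] (Y : C) :
    Function.Surjective (connectingHom R hS Y) := by
  intro x
  obtain ⟨y, hy⟩ := Abelian.Ext.contravariant_sequence_exact₃ hS Y x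
    (Abelian.Ext.eq_zero_of_projective _) (add_zero 1)
  obtain ⟨f, rfl⟩ := Abelian.Ext.linearEquiv₀ (R := R).symm.surjective y
  exact ⟨f, hy⟩

lemma exact_leftComp_connectingHom (hS : S.ShortExact) (Y : C) :
    Function.Exact (Linear.leftComp R Y S.f) (connectingHom R hS Y) := by
  intro f
  rw [connectingHom_apply]
  constructor
  · intro h
    obtain ⟨y, hy⟩ := Abelian.Ext.contravariant_sequence_exact₁ hS Y (.mk₀ f) (add_zero 1) h
    obtain ⟨g, rfl⟩ := Abelian.Ext.linearEquiv₀ (R := R).symm.surjective y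
    refine ⟨g, Abelian.Ext.addEquiv₀.symm.injective ?_⟩
    simpa using hy
  · rintro ⟨g, rfl⟩
    simp [← Abelian.Ext.mk₀_comp_mk₀]

/-- The module `Ext¹(X₃, Y)` as the cokernel of `Hom(X₂, Y) → Hom(X₁, Y)`. -/
noncomputable def quotientLeftCompEquivExtOne (hS : S.ShortExact) [Projective S.X₂] (Y : C) :
    ((S.X₁ ⟶ Y) ⧸ LinearMap.range (Linear.leftComp R Y S.f)) ≃ₗ[R] Abelian.Ext S.X₃ Y 1 :=
  (exact_leftComp_connectingHom R hS Y).linearEquivOfSurjective (connectingHom_surjective R hS Y)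

end ShortExact

section Telescope

variable {R : Type*} [CommRing R]

/-- The map `(xₖ) ↦ (xₖ - aₖ xₖ₊₁)`, whose cokernel is `lim¹` of the tower
`⋯ → M → M` of multiplications by the `aₖ`. -/
def telescope (a : ℕ → R) (M : Type*) [AddCommGroup M] [Module R M] : (ℕ → M) →ₗ[R] (ℕ → M) :=
  LinearMap.pi fun k => LinearMap.proj k - a k • LinearMap.proj (k + 1)

lemma telescope_apply (a : ℕ → R) {M : Type*} [AddCommGroup M] [Module R M] (x : ℕ → M) (k : ℕ) :
    telescope a M x k = x k - a k • x (k + 1) := rfl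

/-- The endomorphism `eₖ ↦ eₖ - aₖ eₖ₊₁` of the free module on `e₀, e₁, …`; the functor
`Hom(-, M)` turns it into `telescope a M`. -/
noncomputable def telescopeRelations (a : ℕ → R) : (ℕ →₀ R) →ₗ[R] (ℕ →₀ R) :=
  Finsupp.linearCombination R fun k => .single k 1 - .single (k + 1) (a k)

variable {a : ℕ → R}

lemma telescopeRelations_single (k : ℕ) (c : R) :
    telescopeRelations a (.single k c) = .single k c - .single (k + 1) (c * a k) := by
  simp only [telescopeRelations, Finsupp.linearCombination_single, smul_sub, Finsupp.smul_single,
    smul_eq_mul, mul_one]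

lemma telescopeRelations_apply_zero (x : ℕ →₀ R) : telescopeRelations a x 0 = x 0 := by
  induction x using Finsupp.induction_linear with
  | zero => simp
  | add x y hx hy => simp [hx, hy]
  | single k c => simp [telescopeRelations_single]

lemma telescopeRelations_apply_succ (x : ℕ →₀ R) (k : ℕ) :
    telescopeRelations a x (k + 1) = x (k + 1) - x k * a k := by
  induction x using Finsupp.induction_linear with
  | zero => simp
  | add x y hx hy => simp only [map_add, Finsupp.add_apply, hx, hy]; ring
  | single j c =>
    obtain rfl | h := eq_or_ne j k
    · simp [telescopeRelations_single]
    · simp [telescopeRelations_single, h]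

lemma telescopeRelations_injective : Function.Injective (telescopeRelations a) := by
  rw [injective_iff_map_eq_zero]
  intro x hx
  ext k
  induction k with
  | zero => rw [← telescopeRelations_apply_zero (a := a), hx]
  | succ k ih => simpa [hx, ih] using (telescopeRelations_apply_succ (a := a) x k).symm

lemma single_sub_single_mul_prod_mem_range_telescopeRelations {k n : ℕ} (hn : k ≤ n) (c : R) :
    .single k c - .single n (c * ∏ i ∈ Finset.Ico k n, a i) ∈
      LinearMap.range (telescopeRelations a) := by
  induction n, hn using Nat.le_induction with
  | base => simp
  | succ n hn ih =>
    rw [Finset.prod_Ico_succ_top hn, ← mul_assoc, ← sub_add_sub_cancel]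
    exact add_mem ih ⟨_, telescopeRelations_single n _⟩

lemma exists_sub_single_mem_range_telescopeRelations (x : ℕ →₀ R) :
    ∃ n c, x - .single n c ∈ LinearMap.range (telescopeRelations a) := by
  induction x using Finsupp.induction_linear with
  | zero => exact ⟨0, 0, by simp⟩
  | add x y hx hy =>
    obtain ⟨m, c, hc⟩ := hx
    obtain ⟨n, d, hd⟩ := hy
    have hc' := add_mem hc
      (single_sub_single_mul_prod_mem_range_telescopeRelations (le_max_left m n) c)
    have hd' := add_mem hd
      (single_sub_single_mul_prod_mem_range_telescopeRelations (le_max_right m n) d)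
    have := add_mem hc' hd'
    rw [sub_add_sub_cancel, sub_add_sub_cancel, ← add_sub_add_comm, ← Finsupp.single_add] at this
    exact ⟨_, _, this⟩
  | single k c => exact ⟨k, c, by simp⟩

variable {A : Type*} [AddCommGroup A] [Module R A] {q : ℕ → A}

lemma linearCombination_comp_telescopeRelations (hq : ∀ k, q k = a k • q (k + 1)) :
    Finsupp.linearCombination R q ∘ₗ telescopeRelations a = 0 := by
  ext k
  simp [telescopeRelations_single, hq k]

lemma exact_telescopeRelations_linearCombination (hq : ∀ k, q k = a k • q (k + 1))
    (hq₀ : ∀ k (c : R), c • q k = 0 → c = 0) :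
    Function.Exact (telescopeRelations a) (Finsupp.linearCombination R q) := by
  have h := linearCombination_comp_telescopeRelations hq
  refine LinearMap.exact_iff.2 (le_antisymm (fun x hx => ?_) (LinearMap.range_le_ker_iff.2 h))
  obtain ⟨n, c, hc⟩ := exists_sub_single_mem_range_telescopeRelations (a := a) x
  have hcq : c • q n = 0 := by
    have := LinearMap.range_le_ker_iff.2 h hc
    rwa [LinearMap.mem_ker, map_sub, hx, zero_sub, neg_eq_zero,
      Finsupp.linearCombination_single] at this
  rwa [hq₀ n c hcq, Finsupp.single_zero, sub_zero] at hc

lemma telescope_comp_compLeft {M N : Type*} [AddCommGroup M] [Module R M] [AddCommGroup N]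
    [Module R N] (φ : M →ₗ[R] N) :
    telescope a N ∘ₗ φ.compLeft ℕ = φ.compLeft ℕ ∘ₗ telescope a M := by
  ext x k
  simp [telescope_apply]

end Telescope

section TelescopeExt

universe u

variable {R : Type u} [CommRing R] {a : ℕ → R} {A : Type u} [AddCommGroup A] [Module R A]
  {q : ℕ → A}

/-- The presentation of `A` by generators `qₖ` and relations `qₖ = aₖ qₖ₊₁`. -/
noncomputable def telescopePresentation (hq : ∀ k, q k = a k • q (k + 1)) :
    ShortComplex (ModuleCat R) :=
  .mk (ModuleCat.ofHom (telescopeRelations a)) (ModuleCat.ofHom (Finsupp.linearCombination R q))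
    (ModuleCat.hom_ext (linearCombination_comp_telescopeRelations hq))

instance (hq : ∀ k, q k = a k • q (k + 1)) : Projective (telescopePresentation hq).X₂ :=
  inferInstanceAs (Projective (ModuleCat.of R (ℕ →₀ R)))

lemma telescopePresentation_shortExact (hq : ∀ k, q k = a k • q (k + 1))
    (hq₀ : ∀ k (c : R), c • q k = 0 → c = 0) (hspan : Submodule.span R (Set.range q) = ⊤) :
    (telescopePresentation hq).ShortExact :=
  ModuleCat.shortComplex_shortExact _ (exact_telescopeRelations_linearCombination hq hq₀)
    telescopeRelations_injective
    (LinearMap.range_eq_top.1 ((Finsupp.range_linearCombination R).trans hspan))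

variable (R) (M : Type u) [AddCommGroup M] [Module R M]

/-- A morphism from the free module on `e₀, e₁, …` to `M`, as the sequence of its values at
the `eₖ`. -/
noncomputable def homFinsuppLinearEquiv :
    (ModuleCat.of R (ℕ →₀ R) ⟶ ModuleCat.of R M) ≃ₗ[R] (ℕ → M) :=
  ModuleCat.homLinearEquiv ≪≫ₗ (Finsupp.llift M R R ℕ).symm

variable {R}

variable {M} in
lemma homFinsuppLinearEquiv_apply (f : ModuleCat.of R (ℕ →₀ R) ⟶ ModuleCat.of R M) (k : ℕ) :
    homFinsuppLinearEquiv R M f k = f.hom (.single k 1) := rfl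

lemma homFinsuppLinearEquiv_comp_leftComp :
    (homFinsuppLinearEquiv R M).toLinearMap ∘ₗ
        Linear.leftComp R (ModuleCat.of R M) (ModuleCat.ofHom (telescopeRelations a)) =
      telescope a M ∘ₗ (homFinsuppLinearEquiv R M).toLinearMap := by
  refine LinearMap.ext fun f => funext fun k => ?_
  have h : f.hom (.single (k + 1) (a k)) = a k • f.hom (.single (k + 1) 1) := by
    rw [← map_smul, Finsupp.smul_single_one]
  simp [telescope_apply, homFinsuppLinearEquiv_apply, telescopeRelations_single, h]

lemma map_range_leftComp_telescopeRelations :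
    (LinearMap.range (Linear.leftComp R (ModuleCat.of R M)
      (ModuleCat.ofHom (telescopeRelations a)))).map (homFinsuppLinearEquiv R M).toLinearMap =
      LinearMap.range (telescope a M) := by
  rw [← LinearMap.range_comp, homFinsuppLinearEquiv_comp_leftComp,
    LinearMap.range_comp_of_range_eq_top _ (LinearEquiv.range _)]

/-- If `A` is generated by torsion-free elements `qₖ = aₖ qₖ₊₁`, then `Ext¹(A, M)` is the
cokernel of `telescope a M`. -/
noncomputable def extOneEquivQuotientTelescope (hq : ∀ k, q k = a k • q (k + 1))
    (hq₀ : ∀ k (c : R), c • q k = 0 → c = 0) (hspan : Submodule.span R (Set.range q) = ⊤) :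
    Abelian.Ext (ModuleCat.of R A) (ModuleCat.of R M) 1 ≃ₗ[R]
      (ℕ → M) ⧸ LinearMap.range (telescope a M) :=
  (quotientLeftCompEquivExtOne R (telescopePresentation_shortExact hq hq₀ hspan) _).symm ≪≫ₗ
    Submodule.Quotient.equiv _ _ (homFinsuppLinearEquiv R M)
      (map_range_leftComp_telescopeRelations M)

end TelescopeExt

section Cardinality

universe u

lemma mk_quotient_telescope_le_continuum {R : Type*} [CommRing R] (a : ℕ → R) (M : Type*)
    [AddCommGroup M] [Module R M] (hM : #M ≤ 𝔠) :
    #((ℕ → M) ⧸ LinearMap.range (telescope a M)) ≤ 𝔠 :=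
  calc #((ℕ → M) ⧸ LinearMap.range (telescope a M))
      ≤ #(ℕ → M) := mk_le_of_surjective (Submodule.mkQ_surjective _)
    _ = #M ^ ℵ₀ := by simp
    _ ≤ 𝔠 ^ ℵ₀ := power_le_power_right hM
    _ = 𝔠 := continuum_power_aleph0

lemma mk_quotient_telescope_le_of_surjective {R : Type*} [CommRing R] (a : ℕ → R) {M N : Type u}
    [AddCommGroup M] [Module R M] [AddCommGroup N] [Module R N] (φ : M →ₗ[R] N)
    (hφ : Function.Surjective φ) :
    #((ℕ → N) ⧸ LinearMap.range (telescope a N)) ≤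
      #((ℕ → M) ⧸ LinearMap.range (telescope a M)) := by
  have h : LinearMap.range (telescope a M) ≤
      (LinearMap.range (telescope a N)).comap (φ.compLeft ℕ) := by
    rintro _ ⟨x, rfl⟩
    exact ⟨φ.compLeft ℕ x, LinearMap.congr_fun (telescope_comp_compLeft φ) x⟩
  have hsurj : LinearMap.range (φ.compLeft ℕ) = ⊤ := LinearMap.range_eq_top.2 hφ.comp_left
  refine mk_le_of_surjective (f := Submodule.mapQ _ _ _ h) (LinearMap.range_eq_top.1 ?_)
  rw [Submodule.range_mapQ, hsurj, Submodule.map_top, Submodule.range_mkQ]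

variable {a : ℕ → ℤ}

lemma eq_zero_of_abs_telescope_le_one (ha : ∀ k, 2 ≤ |a k|) {x : ℕ → ℤ} (hx₀ : x 0 = 0)
    (hx : ∀ k, |telescope a ℤ x k| ≤ 1) : x = 0 := by
  ext k
  induction k with
  | zero => exact hx₀
  | succ k ih =>
    have h := hx k
    rw [telescope_apply, ih, Pi.zero_apply, zero_sub, abs_neg, smul_eq_mul, abs_mul] at h
    rw [Pi.zero_apply, ← Int.abs_lt_one_iff]
    nlinarith [ha k, abs_nonneg (x (k + 1))]

/-- The class of a sequence of bits in the cokernel of `telescope a ℤ`. -/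
def bitClass (a : ℕ → ℤ) (s : ℕ → Bool) : (ℕ → ℤ) ⧸ LinearMap.range (telescope a ℤ) :=
  Submodule.Quotient.mk fun k => (s k).toNat

lemma countable_bitClass_fiber (ha : ∀ k, 2 ≤ |a k|)
    (y : (ℕ → ℤ) ⧸ LinearMap.range (telescope a ℤ)) : Countable (bitClass a ⁻¹' {y}) := by
  obtain ⟨u, rfl⟩ := Submodule.Quotient.mk_surjective _ y
  have (s : bitClass a ⁻¹' {Submodule.Quotient.mk u}) :
      ∃ x, telescope a ℤ x = (fun k => ((s.1 k).toNat : ℤ)) - u :=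
    (Submodule.Quotient.eq _).1 s.2
  choose x hx using this
  refine (Function.Injective.countable (f := fun s => x s 0)) fun s t hst => ?_
  have hbit (k : ℕ) : telescope a ℤ (x s - x t) k = ((s.1 k).toNat - (t.1 k).toNat : ℤ) := by
    rw [map_sub, hx, hx, sub_sub_sub_cancel_right, Pi.sub_apply]
  have hzero : x s - x t = 0 := eq_zero_of_abs_telescope_le_one ha (sub_eq_zero.2 hst) fun k => by
    rw [hbit]
    cases s.1 k <;> cases t.1 k <;> decide
  refine Subtype.ext (funext fun k => ?_)
  have := hbit k
  rw [hzero, map_zero, Pi.zero_apply] at this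
  revert this
  cases s.1 k <;> cases t.1 k <;> decide

lemma continuum_le_mk_quotient_telescope_int (ha : ∀ k, 2 ≤ |a k|) :
    𝔠 ≤ #((ℕ → ℤ) ⧸ LinearMap.range (telescope a ℤ)) := by
  have hbits : #(ℕ → Bool) = 𝔠 := by simp
  by_contra! h
  have : Uncountable (ℕ → Bool) := by
    rw [← aleph0_lt_mk_iff, hbits]
    exact aleph0_lt_continuum
  obtain ⟨y, hy⟩ := exists_uncountable_fiber (bitClass a) (h.trans_eq hbits.symm)
  exact not_countable (α := bitClass a ⁻¹' {y}) (countable_bitClass_fiber ha y)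

end Cardinality

lemma one_div_factorial_succ (k : ℕ) :
    1 / ((k + 1).factorial : ℚ) = (k + 2 : ℤ) • (1 / ((k + 1 + 1).factorial : ℚ)) := by
  rw [Nat.factorial_succ (k + 1), zsmul_eq_mul]
  push_cast
  field_simp
  ring

lemma span_range_one_div_factorial_succ :
    Submodule.span ℤ (Set.range fun k : ℕ => 1 / ((k + 1).factorial : ℚ)) = ⊤ := by
  refine eq_top_iff.2 fun r _ => ?_
  obtain ⟨d, hd⟩ := Nat.exists_eq_succ_of_ne_zero r.den_ne_zero
  have : (r.num * d.factorial) • (1 / ((d + 1).factorial : ℚ)) = r := by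
    conv_rhs => rw [← Rat.num_div_den r, hd]
    rw [Nat.factorial_succ, zsmul_eq_mul]
    push_cast
    field_simp
  rw [← this]
  exact Submodule.smul_mem _ _ (Submodule.subset_span ⟨d, rfl⟩)

theorem stmt1_general {a : ℕ → ℤ} (ha : ∀ k, 2 ≤ |a k|)
    {A : Type} [AddCommGroup A] {q : ℕ → A} (hq : ∀ k, q k = a k • q (k + 1))
    (hq₀ : ∀ k (c : ℤ), c • q k = 0 → c = 0) (hspan : Submodule.span ℤ (Set.range q) = ⊤)
    {M : Type} [AddCommGroup M] (hM : #M ≤ 𝔠) (φ : M →ₗ[ℤ] ℤ)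
    (hφ : Function.Surjective φ) :
    #(((Ext ℤ (ModuleCat ℤ) 1).obj (op (ModuleCat.of ℤ A))).obj (ModuleCat.of ℤ M)) = 𝔠 := by
  rw [mk_congr (extSuccLinearEquiv ℤ (ModuleCat.of ℤ A) (ModuleCat.of ℤ M) 0).toEquiv,
    mk_congr (extOneEquivQuotientTelescope M hq hq₀ hspan).toEquiv]
  exact (mk_quotient_telescope_le_continuum a M hM).antisymm
    ((continuum_le_mk_quotient_telescope_int ha).trans
      (mk_quotient_telescope_le_of_surjective a φ hφ))

/-- For every `n ≥ 1`, the abelian group `Ext¹_ℤ(ℚ, ℤ ⊕ ⋯ ⊕ ℤ)` (with `n` summands `ℤ`)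
has the cardinality of the continuum. -/
theorem stmt1 (n : ℕ) (hn : 1 ≤ n) :
    Cardinal.mk (((Ext ℤ (ModuleCat ℤ) 1).obj
        (Opposite.op (ModuleCat.of ℤ ℚ))).obj (ModuleCat.of ℤ (Fin n → ℤ))) =
      Cardinal.continuum :=
  stmt1_general (a := fun k => k + 2) (fun k => le_abs.2 (.inl (by lia)))
    one_div_factorial_succ (fun k c hc => by simpa [Nat.factorial_ne_zero] using hc)
    span_range_one_div_factorial_succ (mk_le_aleph0.trans aleph0_le_continuum)
    (LinearMap.proj ⟨0, hn⟩) (LinearMap.proj_surjective _)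
end

section
/- The join X ∗ Y of an m-connected space X and an n-connected space Y is (m + n + 2)-connected. -/
open scoped Topology in
/-- A space is `n`-connected if it is nonempty and its homotopy groups (including `π₀`)
vanish in degrees `≤ n`. -/
def IsNConnected (n : ℕ) (X : Type*) [TopologicalSpace X] : Prop :=
  Nonempty X ∧ ∀ (x : X) (i : ℕ), i ≤ n → Subsingleton (π_ i X x)

/-- The relation defining the topological join `X ∗ Y` as a quotient of `X × I × Y`. -/
def joinRel (X Y : Type*) : (X × unitInterval × Y) → (X × unitInterval × Y) → Prop :=
  fun p q => (p.2.1 = 0 ∧ q.2.1 = 0 ∧ p.1 = q.1) ∨ (p.2.1 = 1 ∧ q.2.1 = 1 ∧ p.2.2 = q.2.2)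

/-- The topological join `X ∗ Y`. -/
def Join (X Y : Type*) [TopologicalSpace X] [TopologicalSpace Y] : Type _ :=
  Quot (joinRel X Y)

instance (X Y : Type*) [TopologicalSpace X] [TopologicalSpace Y] :
    TopologicalSpace (Join X Y) := instTopologicalSpaceQuot

/-!
Homotopy groups vanish in degrees `< p` if and only if maps `∂[-1, 1]^j → X` extend over
`[-1, 1]^j` for `j ≤ p`. So let `p` and `q` be such bounds for `X` and `Y`, and consider a map
`φ : ∂[-M, M]^d → X ∗ Y` with `d ≤ p + q + 1`. After subdivision and a homotopy,
`φ z = (x z, s z, y z)` with `x` and `y` continuous on cube complexes containing `{s ≤ 1}` and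
`{0 ≤ s}`. By induction over cells, `x` extends over the union of the cells on which `d - p`
coordinates are constant even integers, whose dimension is at most `p`, and `y` over the union of
the cells on which `p + 1` coordinates are constant odd integers, whose dimension is at most `q`.
These two complexes are dual to each other: every coordinate is near an even or an odd integer, so
at each point of the cube at least one of two perturbations `e` and `o` of the identity, which are
constant near the even respectively the odd integers, takes its value in the corresponding complex.
A function `t` separating the two cases yields the map `z ↦ (x (e z), t z, y (o z))` on `[-M, M]^d`.
Its restriction to the boundary is homotopic to `φ`: first move `t` to `s` linearly, then `e z` and
`o z` to `z` along segments, which stay in the carrier cell of `z`.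
-/

open Set Metric Topology unitInterval

section ExtendsOver

variable {V W X : Type*} [TopologicalSpace V] [TopologicalSpace W] [TopologicalSpace X]

/-- The restriction of `f` to `L` is the restriction of a map which is continuous on `K`. Maps on
subsets are encoded by total functions, so the values of `f` off `L` are irrelevant. -/
def ExtendsOver (f : W → X) (L K : Set W) : Prop :=
  ∃ g : W → X, ContinuousOn g K ∧ EqOn g f L

lemma ExtendsOver.of_comp {f : W → X} {L K : Set W} {L' K' : Set V} (a : V → W) (b : W → V)
    (hb : ContinuousOn b K) (hK : MapsTo b K K') (hL : MapsTo b L L')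
    (hab : EqOn (a ∘ b) id L) (hf : ExtendsOver (f ∘ a) L' K') : ExtendsOver f L K := by
  obtain ⟨g, hg, hgf⟩ := hf
  refine ⟨g ∘ b, hg.comp hb hK, fun w hw => ?_⟩
  exact (hgf (hL hw)).trans (congrArg f (hab hw))

lemma ExtendsOver.congr {f g : W → X} {L K : Set W} (hf : ExtendsOver f L K) (hfg : EqOn f g L) :
    ExtendsOver g L K :=
  hf.imp fun _ h => ⟨h.1, h.2.trans hfg⟩

lemma continuousOn_if_le {D : Set W} {a b : W → ℝ} {f g : W → X} (ha : ContinuousOn a D)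
    (hb : ContinuousOn b D) (hf : ContinuousOn f (D ∩ {w | a w ≤ b w}))
    (hg : ContinuousOn g (D ∩ {w | b w ≤ a w})) (hfg : ∀ w ∈ D, a w = b w → f w = g w) :
    ContinuousOn (fun w => if a w ≤ b w then f w else g w) D := by
  rw [continuousOn_iff_continuous_domRestrict] at ha hb ⊢
  exact continuous_if_le ha hb
    (hf.comp continuous_subtype_val.continuousOn fun w hw => ⟨w.2, hw⟩)
    (hg.comp continuous_subtype_val.continuousOn fun w hw => ⟨w.2, hw⟩) fun w => hfg w w.2

lemma ExtendsOver.of_homotopy {E : Type*} [NormedAddCommGroup E] [NormedSpace ℝ E] {R : ℝ}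
    (hR : 0 < R) {φ ψ : E → X} (H : E × I → X) (hH : ContinuousOn H (sphere 0 R ×ˢ univ))
    (H0 : ∀ z ∈ sphere 0 R, H (z, 0) = φ z) (H1 : ∀ z ∈ sphere 0 R, H (z, 1) = ψ z)
    (hψ : ExtendsOver ψ (sphere 0 R) (closedBall 0 R)) :
    ExtendsOver φ (sphere 0 R) (closedBall 0 R) := by
  obtain ⟨g, hg, hgψ⟩ := hψ
  let time : E → I := fun z => projIcc 0 1 zero_le_one (2 - 2 * ‖z‖ / R)
  have htime : Continuous time := continuous_projIcc.comp (by fun_prop)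
  let collar : E → X := fun z => H ((R / ‖z‖) • z, time z)
  have hcollar : ContinuousOn collar {z | R / 2 ≤ ‖z‖} := by
    have hne : ∀ z ∈ {z : E | R / 2 ≤ ‖z‖}, ‖z‖ ≠ 0 := fun z (hz : R / 2 ≤ ‖z‖) => by linarith
    refine hH.comp (((continuousOn_const.div continuousOn_id.norm hne).smul
      continuousOn_id).prodMk htime.continuousOn) fun z hz => ⟨?_, mem_univ _⟩
    rw [mem_sphere_zero_iff_norm, norm_smul, norm_div, norm_norm, Real.norm_of_nonneg hR.le,
      div_mul_cancel₀ _ (hne z hz)]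
  have hcore : ContinuousOn (fun z => g ((2 : ℝ) • z)) {z | ‖z‖ ≤ R / 2} := by
    refine hg.comp (by fun_prop) fun z (hz : ‖z‖ ≤ R / 2) => ?_
    rw [mem_closedBall_zero_iff, norm_smul, Real.norm_of_nonneg zero_le_two]
    linarith
  have hagree : ∀ z : E, ‖z‖ = R / 2 → g ((2 : ℝ) • z) = collar z := fun z hz => by
    have h2z : (2 : ℝ) • z ∈ sphere (0 : E) R := by
      rw [mem_sphere_zero_iff_norm, norm_smul, hz, Real.norm_of_nonneg zero_le_two]
      ring
    have hscale : R / ‖z‖ = 2 := by rw [hz]; field_simp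
    have hone : time z = 1 := projIcc_of_right_le _ (by rw [hz]; field_simp; norm_num)
    simp only [collar, hscale, hone, H1 _ h2z, hgψ h2z]
  refine ⟨fun z => if ‖z‖ ≤ R / 2 then g ((2 : ℝ) • z) else collar z,
    continuousOn_if_le continuousOn_id.norm continuousOn_const (hcore.mono inter_subset_right)
      (hcollar.mono inter_subset_right) fun z _ => hagree z, fun z hz => ?_⟩
  have hzR : ‖z‖ = R := mem_sphere_zero_iff_norm.1 hz
  have hzero : time z = 0 := projIcc_of_le_left _ (by rw [hzR]; field_simp; norm_num)
  simp only [hzR, show ¬R ≤ R / 2 by linarith, if_false, collar, div_self hR.ne', one_smul, hzero,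
    H0 z hz]

lemma mapsTo_inv_smul_sphere {E : Type*} [NormedAddCommGroup E] [NormedSpace ℝ E] {R : ℝ}
    (hR : 0 < R) : MapsTo (fun z : E => R⁻¹ • z) (sphere 0 R) (sphere 0 1) := fun z hz => by
  rw [mem_sphere_zero_iff_norm] at hz ⊢
  rw [norm_smul_of_nonneg (inv_nonneg.2 hR.le), hz, inv_mul_cancel₀ hR.ne']

lemma ExtendsOver.of_inv_smul {E : Type*} [NormedAddCommGroup E] [NormedSpace ℝ E] {R : ℝ}
    (hR : 0 < R) {f : E → X}
    (h : ExtendsOver (fun z => f (R⁻¹ • z)) (sphere 0 R) (closedBall 0 R)) :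
    ExtendsOver f (sphere 0 1) (closedBall 0 1) := by
  refine .of_comp (fun z => R⁻¹ • z) (fun z => R • z) (by fun_prop) (fun z hz => ?_)
    (fun z hz => ?_) (fun z _ => inv_smul_smul₀ hR.ne' z) h
  · rw [mem_closedBall_zero_iff] at hz ⊢
    rw [norm_smul_of_nonneg hR.le]
    exact mul_le_of_le_one_right hR.le hz
  · rw [mem_sphere_zero_iff_norm] at hz ⊢
    rw [norm_smul_of_nonneg hR.le, hz, mul_one]

end ExtendsOver

section Sphere

variable {k : ℕ} {X : Type*} [TopologicalSpace X]

/-- Every continuous map from the unit sphere of the sup norm on `ℝⁿ`, which is homeomorphic to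
the standard `(n - 1)`-sphere, extends continuously over the unit ball. -/
def SphereMapsExtend (n : ℕ) (X : Type*) [TopologicalSpace X] : Prop :=
  ∀ f : (Fin n → ℝ) → X, ContinuousOn f (sphere 0 1) → ExtendsOver f (sphere 0 1) (closedBall 0 1)

lemma sphereMapsExtend_zero : SphereMapsExtend 0 X := fun f _ =>
  ⟨f, continuous_of_discreteTopology.continuousOn, fun _ _ => rfl⟩

lemma pi_norm_eq_iff {ι : Type*} [Fintype ι] {R : ℝ} (hR : 0 < R) {z : ι → ℝ} :
    ‖z‖ = R ↔ (∀ i, |z i| ≤ R) ∧ ∃ i, |z i| = R := by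
  refine ⟨fun h => ⟨fun i => h ▸ norm_le_pi_norm z i, ?_⟩, fun ⟨hle, i, hi⟩ => ?_⟩
  · by_contra! hne
    exact h.not_lt ((pi_norm_lt_iff hR).2 fun i => (h ▸ norm_le_pi_norm z i).lt_of_ne (hne i))
  · exact le_antisymm ((pi_norm_le_iff_of_nonneg hR.le).2 hle) (hi ▸ norm_le_pi_norm z i)

lemma eq_one_or_of_norm_eq_one {z : Fin (k + 1) → ℝ} (hz : ‖z‖ = 1) :
    z 0 = 1 ∨ z 0 = -1 ∨ ‖Fin.tail z‖ = 1 := by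
  rw [pi_norm_eq_iff one_pos, Fin.exists_fin_succ, abs_eq zero_le_one] at hz
  obtain ⟨hle, (h | h) | h⟩ := hz
  exacts [.inl h, .inr (.inl h), .inr (.inr ((pi_norm_eq_iff one_pos).2 ⟨fun j => hle j.succ, h⟩))]

/-- The affine coordinates identifying the cube `I^k` with the unit ball of the sup norm. -/
def cubeCoord (v : Fin k → I) : Fin k → ℝ := fun i => 2 * (v i : ℝ) - 1

/-- The continuous extension to `ℝᵏ` of the inverse of `cubeCoord`. -/
noncomputable def cubeProj (w : Fin k → ℝ) : Fin k → I := fun i =>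
  projIcc 0 1 zero_le_one ((w i + 1) / 2)

@[fun_prop]
lemma continuous_cubeCoord : Continuous (cubeCoord (k := k)) := by
  unfold cubeCoord; fun_prop

@[fun_prop]
lemma continuous_cubeProj : Continuous (cubeProj (k := k)) :=
  continuous_pi fun _ => continuous_projIcc.comp (by fun_prop)

@[simp]
lemma cubeProj_cubeCoord (v : Fin k → I) : cubeProj (cubeCoord v) = v := by
  ext i
  simp [cubeProj, cubeCoord]

lemma cubeCoord_cubeProj {w : Fin k → ℝ} (hw : ‖w‖ ≤ 1) : cubeCoord (cubeProj w) = w := by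
  ext i
  have hwi : -1 ≤ w i ∧ w i ≤ 1 := abs_le.1 ((norm_le_pi_norm w i).trans hw)
  have hmem : (w i + 1) / 2 ∈ Icc (0 : ℝ) 1 := ⟨by linarith, by linarith⟩
  simp only [cubeCoord, cubeProj, projIcc_of_mem _ hmem]
  ring

lemma abs_two_mul_sub_one_le (t : I) : |2 * (t : ℝ) - 1| ≤ 1 :=
  abs_le.2 ⟨by linarith [t.2.1], by linarith [t.2.2]⟩

lemma norm_cubeCoord_le (v : Fin k → I) : ‖cubeCoord v‖ ≤ 1 :=
  (pi_norm_le_iff_of_nonneg zero_le_one).2 fun i => abs_two_mul_sub_one_le (v i)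

lemma norm_cubeCoord_eq_one_iff {v : Fin k → I} :
    ‖cubeCoord v‖ = 1 ↔ v ∈ Cube.boundary (Fin k) := by
  have hend (t : I) : |2 * (t : ℝ) - 1| = 1 ↔ t = 0 ∨ t = 1 := by
    rw [abs_eq zero_le_one, or_comm, Subtype.ext_iff, Subtype.ext_iff, Icc.coe_zero, Icc.coe_one]
    refine or_congr ?_ ?_ <;> constructor <;> intro h <;> linarith
  rw [pi_norm_eq_iff one_pos]
  exact (and_iff_right fun i => abs_two_mul_sub_one_le (v i)).trans
    (exists_congr fun i => hend (v i))

lemma mapsTo_cubeCoord : MapsTo cubeCoord (Cube.boundary (Fin k)) (sphere 0 1) := fun _ hv =>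
  mem_sphere_zero_iff_norm.2 (norm_cubeCoord_eq_one_iff.2 hv)

lemma mapsTo_cubeProj : MapsTo cubeProj (sphere 0 1) (Cube.boundary (Fin k)) := fun w hw => by
  rw [mem_sphere_zero_iff_norm] at hw
  rwa [← norm_cubeCoord_eq_one_iff, cubeCoord_cubeProj hw.le]

lemma SphereMapsExtend.extendsOver_cube (h : SphereMapsExtend k X) {β : (Fin k → I) → X}
    (hβ : ContinuousOn β (Cube.boundary (Fin k))) : ExtendsOver β (Cube.boundary (Fin k)) univ :=
  .of_comp cubeProj cubeCoord continuous_cubeCoord.continuousOn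
    (fun v _ => mem_closedBall_zero_iff.2 (norm_cubeCoord_le v)) mapsTo_cubeCoord
    (fun v _ => cubeProj_cubeCoord v)
    (h _ (hβ.comp continuous_cubeProj.continuousOn mapsTo_cubeProj))

lemma extendsOver_closedBall_of_cube {f : (Fin k → ℝ) → X}
    (h : ExtendsOver (f ∘ cubeCoord) (Cube.boundary (Fin k)) univ) :
    ExtendsOver f (sphere 0 1) (closedBall 0 1) :=
  .of_comp cubeCoord cubeProj continuous_cubeProj.continuousOn (mapsTo_univ _ _) mapsTo_cubeProj
    (fun _ hw => cubeCoord_cubeProj (mem_sphere_zero_iff_norm.1 hw).le) h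

lemma mem_cubeBoundary_succ {v : Fin (k + 1) → I} : v ∈ Cube.boundary (Fin (k + 1)) ↔
    (v 0 = 0 ∨ v 0 = 1) ∨ Fin.tail v ∈ Cube.boundary (Fin k) :=
  Fin.exists_fin_succ

lemma extendsOver_cube_of_eqOn {x : X} [Subsingleton (π_ k X x)] {β : (Fin (k + 1) → I) → X}
    (hβ : ContinuousOn β (Cube.boundary (Fin (k + 1))))
    (hx : ∀ v : Fin (k + 1) → I, v 0 = 0 ∨ Fin.tail v ∈ Cube.boundary (Fin k) → β v = x) :
    ExtendsOver β (Cube.boundary (Fin (k + 1))) univ := by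
  let γ : GenLoop (Fin k) X x :=
    ⟨⟨fun v => β (Fin.cons 1 v), hβ.comp_continuous (continuous_const.finCons continuous_id)
      fun v => ⟨0, .inr rfl⟩⟩, fun v hv => hx _ (.inr hv)⟩
  obtain ⟨H⟩ : GenLoop.Homotopic γ GenLoop.const :=
    Quotient.exact (Subsingleton.elim (α := π_ k X x) ⟦γ⟧ ⟦GenLoop.const⟧)
  refine ⟨fun v => H (σ (v 0), Fin.tail v), ?_, fun v hv => ?_⟩
  · exact (H.continuous.comp ((continuous_symm.comp (continuous_apply 0)).prodMk
      continuous_id.finTail)).continuousOn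
  rcases mem_cubeBoundary_succ.1 hv with (h0 | h1) | hbd
  · simp only [h0, symm_zero, hx v (.inl h0), H.apply_one]
    rfl
  · simp only [h1, symm_one]
    refine (H.apply_zero _).trans (congrArg β ?_)
    rw [← h1, Fin.cons_self_tail]
  · exact (H.eq_fst _ hbd).trans ((γ.2 _ hbd).trans (hx v (.inr hbd)).symm)

/-- A homotopy of the unit sphere in the punctured space which starts at the identity and ends
with a map sending every face except `z 0 = 1` to a single point. -/
noncomputable def boxContraction (s : ℝ) (z : Fin (k + 1) → ℝ) : Fin (k + 1) → ℝ :=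
  let ρ := min 1 (‖Fin.tail z‖ + (1 - z 0))
  Fin.cons ((1 - s) * z 0 + s * (1 - 2 * ρ)) ((1 - s * ρ) • Fin.tail z)

lemma continuous_boxContraction :
    Continuous fun p : ℝ × (Fin (k + 1) → ℝ) => boxContraction p.1 p.2 := by
  have hρ : Continuous fun p : ℝ × (Fin (k + 1) → ℝ) => min 1 (‖Fin.tail p.2‖ + (1 - p.2 0)) :=
    continuous_const.min (continuous_snd.finTail.norm.add (by fun_prop))
  exact Continuous.finCons (A := fun _ => ℝ)
    (Continuous.add (by fun_prop)
      (continuous_fst.mul (continuous_const.sub (continuous_const.mul hρ))))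
    ((continuous_const.sub (continuous_fst.mul hρ)).smul continuous_snd.finTail)

lemma boxContraction_zero (z : Fin (k + 1) → ℝ) : boxContraction 0 z = z := by
  simp [boxContraction]

lemma boxContraction_one {z : Fin (k + 1) → ℝ} (hz : ‖z‖ = 1)
    (h : z 0 = -1 ∨ ‖Fin.tail z‖ = 1) : boxContraction 1 z = Fin.cons (-1) 0 := by
  have hle : z 0 ≤ 1 := (le_abs_self _).trans (hz ▸ norm_le_pi_norm z 0)
  have hρ : min 1 (‖Fin.tail z‖ + (1 - z 0)) = 1 := by
    refine min_eq_left ?_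
    rcases h with h | h <;> linarith [norm_nonneg (Fin.tail z)]
  simp only [boxContraction, hρ]
  norm_num

lemma boxContraction_ne_zero {s : ℝ} (hs : s ∈ Icc 0 1) {z : Fin (k + 1) → ℝ} (hz : ‖z‖ = 1) :
    boxContraction s z ≠ 0 := by
  intro h
  set ρ := min 1 (‖Fin.tail z‖ + (1 - z 0)) with hρ
  have hhead : (1 - s) * z 0 + s * (1 - 2 * ρ) = 0 := congrFun h 0
  have htail : (1 - s * ρ) • Fin.tail z = 0 := congrArg Fin.tail h
  rcases smul_eq_zero.1 htail with hsρ | h0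
  · have hρ1 : ρ ≤ 1 := min_le_left _ _
    have hs1 : s = 1 := by nlinarith [hs.1, hs.2]
    rw [hs1] at hhead hsρ
    linarith
  · rw [h0, norm_zero] at hρ
    rcases eq_one_or_of_norm_eq_one hz with h1 | h1 | h1
    · norm_num [h1] at hρ
      norm_num [h1, hρ] at hhead
    · norm_num [h1] at hρ
      norm_num [h1, hρ] at hhead
      linarith
    · simp [h0] at h1

lemma sphereMapsExtend_succ (h : ∀ x : X, Subsingleton (π_ k X x)) :
    SphereMapsExtend (k + 1) X := by
  intro f hf
  let F : (Fin (k + 1) → ℝ) → X := f ∘ NormedSpace.normalize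
  have hF : ContinuousOn F {0}ᶜ := by
    refine hf.comp ?_ fun z hz => mem_sphere_zero_iff_norm.2 (NormedSpace.norm_normalize hz)
    exact (continuousOn_id.norm.inv₀ fun z hz => norm_ne_zero_iff.2 hz).smul continuousOn_id
  let H : (Fin (k + 1) → ℝ) × I → X := fun p => F (boxContraction p.2 p.1)
  have hH : ContinuousOn H (sphere 0 1 ×ˢ univ) :=
    hF.comp (continuous_boxContraction.comp (by fun_prop :
        Continuous fun p : (Fin (k + 1) → ℝ) × I => ((p.2 : ℝ), p.1))).continuousOn
      fun p hp => boxContraction_ne_zero p.2.2 (mem_sphere_zero_iff_norm.1 hp.1)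
  refine ExtendsOver.of_homotopy one_pos H hH (fun z hz => ?_) (fun z _ => rfl) ?_
  · have hz1 := mem_sphere_zero_iff_norm.1 hz
    simp only [H, F, Function.comp_apply, Icc.coe_zero, boxContraction_zero,
      NormedSpace.normalize_eq_self_of_norm_eq_one hz1]
  · have := h (F (Fin.cons (-1) 0))
    refine extendsOver_closedBall_of_cube (extendsOver_cube_of_eqOn (x := F (Fin.cons (-1) 0))
      ((hH.comp (by fun_prop) fun v hv => ⟨mapsTo_cubeCoord hv, mem_univ _⟩ :
        ContinuousOn (fun v => H (cubeCoord v, 1)) _)) fun v hv => ?_)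
    have hv1 : ‖cubeCoord v‖ = 1 :=
      norm_cubeCoord_eq_one_iff.2 (mem_cubeBoundary_succ.2 (hv.imp .inl id))
    have hv2 : cubeCoord v 0 = -1 ∨ ‖Fin.tail (cubeCoord v)‖ = 1 :=
      hv.imp (fun h0 => by simp [cubeCoord, h0]) norm_cubeCoord_eq_one_iff.2
    simp only [H, Function.comp_apply, Icc.coe_one, boxContraction_one hv1 hv2]

lemma SphereMapsExtend.subsingleton_homotopyGroup (h : SphereMapsExtend (k + 1) X) (x : X) :
    Subsingleton (π_ k X x) := by
  refine ⟨Quotient.ind₂ fun γ₀ γ₁ : GenLoop (Fin k) X x => Quotient.sound ?_⟩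
  let β : (Fin (k + 1) → I) → X := fun v =>
    if (v 0 : ℝ) ≤ 1 / 2 then γ₀ (Fin.tail v) else γ₁ (Fin.tail v)
  have hβx (v : Fin (k + 1) → I) (hv : Fin.tail v ∈ Cube.boundary (Fin k)) : β v = x := by
    simp only [β, GenLoop.boundary γ₀ _ hv, GenLoop.boundary γ₁ _ hv, ite_self]
  have hβ : ContinuousOn β (Cube.boundary (Fin (k + 1))) := by
    refine continuousOn_if_le (by fun_prop) continuousOn_const
      ((map_continuous γ₀.1).comp continuous_id.finTail).continuousOn
      ((map_continuous γ₁.1).comp continuous_id.finTail).continuousOn fun v hv h0 => ?_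
    have hbd : Fin.tail v ∈ Cube.boundary (Fin k) := by
      refine (mem_cubeBoundary_succ.1 hv).resolve_left ?_
      rintro (h | h) <;> norm_num [h] at h0
    exact (GenLoop.boundary γ₀ _ hbd).trans (GenLoop.boundary γ₁ _ hbd).symm
  obtain ⟨g, hg, hgβ⟩ := h.extendsOver_cube hβ
  have hcons : Continuous fun p : I × (Fin k → I) => (Fin.cons p.1 p.2 : Fin (k + 1) → I) :=
    Continuous.finCons (A := fun _ => I) continuous_fst continuous_snd
  refine ⟨⟨⟨⟨fun p => g (Fin.cons p.1 p.2), (continuousOn_univ.1 hg).comp hcons⟩,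
    fun v => ?_, fun v => ?_⟩, fun s v hv => ?_⟩⟩
  · refine (hgβ (mem_cubeBoundary_succ.2 (.inl (.inl rfl)))).trans ?_
    simp [β]
  · refine (hgβ (mem_cubeBoundary_succ.2 (.inl (.inr rfl)))).trans ?_
    norm_num [β]
  · have hbd : Fin.tail (Fin.cons s v : Fin (k + 1) → I) ∈ Cube.boundary (Fin k) := hv
    exact (hgβ (mem_cubeBoundary_succ.2 (.inr hbd))).trans
      ((hβx _ hbd).trans (GenLoop.boundary γ₀ v hv).symm)

end Sphere

section CubeComplex

variable {ι X : Type*} {K L : Set (ι → ℝ)} {z w : ι → ℝ}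

/-- The smallest closed cell containing `z` of the decomposition of `ℝ^ι` into integer unit
cubes. -/
def carrier (z : ι → ℝ) : Set (ι → ℝ) :=
  Icc (fun i => (⌊z i⌋ : ℝ)) (fun i => (⌈z i⌉ : ℝ))

/-- The relative boundary of the cell `carrier z`, whose relative interior consists of the points
with the same carrier as `z`. -/
def carrierBoundary (z : ι → ℝ) : Set (ι → ℝ) :=
  {w ∈ carrier z | z ∉ carrier w}

/-- The coordinates in which the cell `carrier z` is an interval rather than a point. -/
def freeCoords (z : ι → ℝ) : Set ι :=
  {i | z i ∉ range ((↑) : ℤ → ℝ)}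

/-- The dimension of the cell `carrier z`. -/
noncomputable def carrierDim (z : ι → ℝ) : ℕ :=
  (freeCoords z).ncard

/-- A union of closed cells of the decomposition of `ℝ^ι` into integer unit cubes. -/
def IsCubeComplex (K : Set (ι → ℝ)) : Prop :=
  ∀ z ∈ K, carrier z ⊆ K

lemma mem_carrier_iff : w ∈ carrier z ↔ ∀ i, ⌊z i⌋ ≤ ⌊w i⌋ ∧ ⌈w i⌉ ≤ ⌈z i⌉ := by
  simp only [carrier, mem_Icc, Pi.le_def, Int.le_floor, Int.ceil_le, forall_and]

lemma mem_carrier_self (z : ι → ℝ) : z ∈ carrier z :=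
  mem_carrier_iff.2 fun _ => ⟨le_rfl, le_rfl⟩

lemma carrier_subset_carrier (h : w ∈ carrier z) : carrier w ⊆ carrier z := by
  intro u hu
  rw [mem_carrier_iff] at *
  exact fun i => ⟨(h i).1.trans (hu i).1, (hu i).2.trans (h i).2⟩

lemma eq_intCast_of_mem_carrier (h : w ∈ carrier z) {i : ι} {n : ℤ} (hi : z i = n) : w i = n := by
  have h1 := h.1 i
  have h2 := h.2 i
  simp only [hi, Int.floor_intCast, Int.ceil_intCast] at h1 h2
  exact le_antisymm h2 h1

lemma ceil_eq_of_mem_freeCoords {i : ι} (hi : i ∈ freeCoords z) : (⌈z i⌉ : ℝ) = ⌊z i⌋ + 1 := by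
  rw [(Int.ceil_eq_floor_add_one_iff_notMem _).2 hi]
  push_cast
  rfl

lemma IsCubeComplex.union (hK : IsCubeComplex K) (hL : IsCubeComplex L) :
    IsCubeComplex (K ∪ L) := by
  rintro z (hz | hz)
  · exact (hK z hz).trans subset_union_left
  · exact (hL z hz).trans subset_union_right

lemma IsCubeComplex.inter (hK : IsCubeComplex K) (hL : IsCubeComplex L) :
    IsCubeComplex (K ∩ L) :=
  fun z hz => subset_inter (hK z hz.1) (hL z hz.2)

lemma isCubeComplex_carrier (z : ι → ℝ) : IsCubeComplex (carrier z) :=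
  fun _ hw => carrier_subset_carrier hw

lemma mem_carrierBoundary_iff : w ∈ carrierBoundary z ↔
    w ∈ carrier z ∧ ∃ i ∈ freeCoords z, w i = ⌊z i⌋ ∨ w i = ⌊z i⌋ + 1 := by
  refine and_congr_right fun hw => ?_
  rw [mem_carrier_iff, not_forall]
  refine exists_congr fun i => ?_
  obtain ⟨hfl, hce⟩ := mem_carrier_iff.1 hw i
  by_cases hi : z i ∈ range ((↑) : ℤ → ℝ)
  · obtain ⟨n, hn⟩ := hi
    simp [freeCoords, eq_intCast_of_mem_carrier hw hn.symm, ← hn]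
  · have hceil : ⌈z i⌉ = ⌊z i⌋ + 1 := (Int.ceil_eq_floor_add_one_iff_notMem _).2 hi
    have hlo : w i = ⌊z i⌋ ↔ ⌈w i⌉ ≤ ⌊z i⌋ := by
      rw [Int.ceil_le, ← (Int.le_floor.1 hfl).ge_iff_eq']
    have hhi : w i = ⌊z i⌋ + 1 ↔ ⌊z i⌋ + 1 ≤ ⌊w i⌋ := by
      have hle : w i ≤ ⌊z i⌋ + 1 := by exact_mod_cast Int.ceil_le.1 (hce.trans_eq hceil)
      rw [Int.le_floor, ← hle.ge_iff_eq]
      push_cast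
      rfl
    rw [and_iff_right (show i ∈ freeCoords z from hi), hlo, hhi, hceil]
    omega

/-- The affine coordinates identifying the cell `carrier z` with the unit ball of the sup norm. -/
noncomputable def cellCoord (z w : ι → ℝ) : freeCoords z → ℝ := fun i => 2 * (w i - ⌊z i⌋) - 1

open Classical in
/-- The inverse of `cellCoord` on the unit ball. -/
noncomputable def cellPoint (z : ι → ℝ) (u : freeCoords z → ℝ) : ι → ℝ := fun i =>
  if h : i ∈ freeCoords z then ⌊z i⌋ + (u ⟨i, h⟩ + 1) / 2 else z i

lemma cellCoord_cellPoint (u : freeCoords z → ℝ) : cellCoord z (cellPoint z u) = u := by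
  ext i
  simp only [cellCoord, cellPoint, i.2, dite_true]
  ring

lemma cellPoint_cellCoord (hw : w ∈ carrier z) : cellPoint z (cellCoord z w) = w := by
  ext i
  by_cases hi : i ∈ freeCoords z
  · simp only [cellCoord, cellPoint, hi, dite_true]
    ring
  · obtain ⟨n, hn⟩ := not_not.1 hi
    simp only [cellPoint, hi, dite_false]
    rw [eq_intCast_of_mem_carrier hw hn.symm, hn]

lemma continuous_cellPoint : Continuous (cellPoint z) := by
  refine continuous_pi fun i => ?_
  by_cases hi : i ∈ freeCoords z <;> simp only [cellPoint, hi, dite_true, dite_false] <;> fun_prop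

section Norm

variable [Fintype ι]

lemma norm_sub_le_one_of_mem_carrier (h : w ∈ carrier z) : ‖w - z‖ ≤ 1 := by
  refine (pi_norm_le_iff_of_nonneg zero_le_one).2 fun i => abs_le.2 ?_
  have h1 : (⌊z i⌋ : ℝ) ≤ w i := h.1 i
  have h2 : w i ≤ (⌈z i⌉ : ℝ) := h.2 i
  rw [Pi.sub_apply]
  constructor <;> linarith [Int.ceil_lt_add_one (z i), Int.lt_floor_add_one (z i)]

lemma isCubeComplex_closedBall (M : ℕ) : IsCubeComplex (closedBall (0 : ι → ℝ) M) := by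
  have hball (z : ι → ℝ) : z ∈ closedBall 0 (M : ℝ) ↔ ∀ i, -(M : ℤ) ≤ ⌊z i⌋ ∧ ⌈z i⌉ ≤ M := by
    rw [mem_closedBall_zero_iff, pi_norm_le_iff_of_nonneg M.cast_nonneg]
    refine forall_congr' fun i => ?_
    rw [Real.norm_eq_abs, abs_le, Int.le_floor, Int.ceil_le]
    push_cast
    rfl
  intro z hz w hw
  rw [hball] at hz ⊢
  rw [mem_carrier_iff] at hw
  exact fun i => ⟨(hz i).1.trans (hw i).1, (hw i).2.trans (hz i).2⟩

lemma isCubeComplex_sphere {M : ℕ} (hM : 0 < M) : IsCubeComplex (sphere (0 : ι → ℝ) M) := by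
  intro z hz w hw
  have hMR : (0 : ℝ) < M := Nat.cast_pos.2 hM
  have hw_le := isCubeComplex_closedBall M z (sphere_subset_closedBall hz) hw
  rw [mem_closedBall_zero_iff] at hw_le
  rw [mem_sphere_zero_iff_norm, pi_norm_eq_iff hMR] at hz ⊢
  obtain ⟨-, i, hi⟩ := hz
  refine ⟨fun j => (norm_le_pi_norm w j).trans hw_le, i, ?_⟩
  rcases (abs_eq hMR.le).1 hi with hi | hi
  · rw [eq_intCast_of_mem_carrier hw (n := M) hi, Int.cast_natCast, Nat.abs_cast]
  · rw [eq_intCast_of_mem_carrier hw (n := -M) (by push_cast; exact hi)]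
    simp

open Classical in
lemma norm_cellCoord_le (hw : w ∈ carrier z) : ‖cellCoord z w‖ ≤ 1 := by
  refine (pi_norm_le_iff_of_nonneg zero_le_one).2 fun i => abs_le.2 ?_
  have h1 := hw.1 i
  have h2 := hw.2 i
  simp only [ceil_eq_of_mem_freeCoords i.2] at h2
  constructor <;> simp only [cellCoord] <;> linarith

open Classical in
lemma cellPoint_mem_carrier {u : freeCoords z → ℝ} (hu : ‖u‖ ≤ 1) : cellPoint z u ∈ carrier z := by
  have hu' i := abs_le.1 ((norm_le_pi_norm u i).trans hu)
  constructor <;> intro i <;> by_cases hi : i ∈ freeCoords z <;>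
    simp only [cellPoint, hi, dite_true, dite_false, Int.floor_le, Int.le_ceil]
  · linarith [(hu' ⟨i, hi⟩).1]
  · linarith [(hu' ⟨i, hi⟩).2, ceil_eq_of_mem_freeCoords hi]

open Classical in
lemma norm_cellCoord_eq_one_iff (hw : w ∈ carrier z) :
    ‖cellCoord z w‖ = 1 ↔ w ∈ carrierBoundary z := by
  have hend (i : freeCoords z) : |cellCoord z w i| = 1 ↔ w i = ⌊z i⌋ ∨ w i = ⌊z i⌋ + 1 := by
    rw [abs_eq zero_le_one, or_comm, cellCoord]
    refine or_congr ?_ ?_ <;> constructor <;> intro h <;> linarith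
  have hle (i : freeCoords z) : |cellCoord z w i| ≤ 1 :=
    (norm_le_pi_norm _ i).trans (norm_cellCoord_le hw)
  rw [pi_norm_eq_iff one_pos, mem_carrierBoundary_iff, and_iff_right hw, and_iff_right hle]
  simp only [hend, Subtype.exists, exists_prop]

end Norm

lemma SphereMapsExtend.extendsOver_pi [TopologicalSpace X] {κ : Type*} [Fintype κ]
    (h : SphereMapsExtend (Nat.card κ) X) {f : (κ → ℝ) → X} (hf : ContinuousOn f (sphere 0 1)) :
    ExtendsOver f (sphere 0 1) (closedBall 0 1) := by
  let e := Finite.equivFin κ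
  have hnorm (u : Fin (Nat.card κ) → ℝ) : ‖u ∘ e‖ = ‖u‖ := e.surjective.pi_norm_comp u
  have hnorm' (u : κ → ℝ) : ‖u ∘ e.symm‖ = ‖u‖ := e.symm.surjective.pi_norm_comp u
  refine .of_comp (· ∘ e) (· ∘ e.symm) (by fun_prop) (fun u hu => ?_) (fun u hu => ?_)
    (fun u _ => ?_) (h _ (hf.comp (by fun_prop) fun u hu => ?_))
  · rwa [mem_closedBall_zero_iff, hnorm', ← mem_closedBall_zero_iff]
  · rwa [mem_sphere_zero_iff_norm, hnorm', ← mem_sphere_zero_iff_norm]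
  · simp [Function.comp_assoc]
  · rwa [mem_sphere_zero_iff_norm, hnorm, ← mem_sphere_zero_iff_norm]

variable [Finite ι]

lemma finite_image_carrier (hK : Bornology.IsBounded K) : (carrier '' K).Finite := by
  have := Fintype.ofFinite ι
  obtain ⟨R, hR⟩ := hK.subset_closedBall 0
  have hbound z (hz : z ∈ K) i : -R ≤ z i ∧ z i ≤ R :=
    abs_le.1 ((norm_le_pi_norm z i).trans (mem_closedBall_zero_iff.1 (hR hz)))
  classical
  have hfin := Set.finite_Icc (fun _ : ι => ⌊-R⌋) (fun _ => ⌈R⌉)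
  refine ((hfin.prod hfin).image fun p : (ι → ℤ) × (ι → ℤ) =>
    Icc (fun i => (p.1 i : ℝ)) (fun i => (p.2 i : ℝ))).subset ?_
  rintro _ ⟨z, hz, rfl⟩
  have hfl i : ⌊-R⌋ ≤ ⌊z i⌋ := Int.floor_mono (hbound z hz i).1
  have hce i : ⌈z i⌉ ≤ ⌈R⌉ := Int.ceil_mono (hbound z hz i).2
  exact ⟨(fun i => ⌊z i⌋, fun i => ⌈z i⌉),
    ⟨⟨hfl, fun i => (Int.floor_le_ceil _).trans (hce i)⟩,
      ⟨fun i => (hfl i).trans (Int.floor_le_ceil _), hce⟩⟩, rfl⟩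

lemma IsCubeComplex.isClosed (hK : IsCubeComplex K) (hb : Bornology.IsBounded K) : IsClosed K := by
  have hunion : K = ⋃₀ (carrier '' K) := by
    rw [sUnion_image]
    exact Subset.antisymm (fun z hz => mem_biUnion hz (mem_carrier_self z)) (iUnion₂_subset hK)
  rw [hunion, sUnion_eq_biUnion]
  refine (finite_image_carrier hb).isClosed_biUnion ?_
  rintro _ ⟨z, -, rfl⟩
  exact isClosed_Icc

variable [TopologicalSpace X]

lemma SphereMapsExtend.extendsOver_carrier {f : (ι → ℝ) → X}
    (h : SphereMapsExtend (carrierDim z) X) (hf : ContinuousOn f (carrierBoundary z)) :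
    ExtendsOver f (carrierBoundary z) (carrier z) := by
  classical
  have := Fintype.ofFinite ι
  refine .of_comp (cellPoint z) (cellCoord z) (K' := closedBall 0 1) (L' := sphere 0 1) ?_
    (fun w hw => mem_closedBall_zero_iff.2 (norm_cellCoord_le hw))
    (fun w hw => mem_sphere_zero_iff_norm.2 ((norm_cellCoord_eq_one_iff hw.1).2 hw))
    (fun w hw => cellPoint_cellCoord hw.1) (SphereMapsExtend.extendsOver_pi ?_ (hf.comp
      continuous_cellPoint.continuousOn fun u hu => ?_))
  · unfold cellCoord; fun_prop
  · rwa [Nat.card_coe_set_eq]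
  · rw [mem_sphere_zero_iff_norm] at hu
    rwa [← norm_cellCoord_eq_one_iff (cellPoint_mem_carrier hu.le), cellCoord_cellPoint]

lemma IsCubeComplex.extendsOver_union_carrier (hL : IsCubeComplex L) (hLc : IsClosed L)
    (hz : z ∉ L) (hbd : carrierBoundary z ⊆ L) (h : SphereMapsExtend (carrierDim z) X)
    {f : (ι → ℝ) → X} (hf : ContinuousOn f L) : ExtendsOver f L (L ∪ carrier z) := by
  classical
  obtain ⟨g, hg, hgf⟩ := h.extendsOver_carrier (hf.mono hbd)
  have hglue : EqOn ((carrier z).piecewise g f) f L := fun w hw => by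
    by_cases hwz : w ∈ carrier z
    · rw [piecewise_eq_of_mem _ _ _ hwz]
      exact hgf ⟨hwz, fun hzw => hz (hL w hw hzw)⟩
    · exact piecewise_eq_of_notMem _ _ _ hwz
  exact ⟨(carrier z).piecewise g f, (hf.congr hglue).union_of_isClosed
    (hg.congr (piecewise_eqOn _ _ _)) hLc isClosed_Icc, hglue⟩

theorem IsCubeComplex.extendsOver (hK : IsCubeComplex K) (hb : Bornology.IsBounded K)
    (hL : IsCubeComplex L) (hLK : L ⊆ K) (hX : ∀ z ∈ K \ L, SphereMapsExtend (carrierDim z) X)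
    {f : (ι → ℝ) → X} (hf : ContinuousOn f L) : ExtendsOver f L K := by
  induction hn : (carrier '' (K \ L)).ncard using Nat.strong_induction_on generalizing L f with
  | _ n ih =>
    rcases (K \ L).eq_empty_or_nonempty with hempty | hne
    · exact ⟨f, hf.mono (sdiff_eq_empty.1 hempty), fun _ _ => rfl⟩
    obtain ⟨_, ⟨z, hz, rfl⟩, hmin⟩ :=
      (finite_image_carrier (hb.subset sdiff_subset)).exists_minimal (hne.image carrier)
    have hbd : carrierBoundary z ⊆ L := fun w ⟨hwz, hzw⟩ => by
      by_contra hwL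
      exact hzw (hmin ⟨w, ⟨hK z hz.1 hwz, hwL⟩, rfl⟩ (carrier_subset_carrier hwz)
        (mem_carrier_self z))
    obtain ⟨g, hg, hgf⟩ := hL.extendsOver_union_carrier (hL.isClosed (hb.subset hLK)) hz.2 hbd
      (hX z hz) hf
    have hlt : (carrier '' (K \ (L ∪ carrier z))).ncard < n := by
      rw [← hn]
      refine ncard_lt_ncard ⟨image_mono (sdiff_subset_sdiff_right subset_union_left), fun hle => ?_⟩
        (finite_image_carrier (hb.subset sdiff_subset))
      obtain ⟨w, hw, hwz⟩ := hle ⟨z, hz, rfl⟩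
      exact hw.2 (.inr (hwz ▸ mem_carrier_self w))
    obtain ⟨g', hg', hg'g⟩ := ih _ hlt (hL.union (isCubeComplex_carrier z))
      (union_subset hLK (hK z hz.1)) (fun w hw => hX w ⟨hw.1, fun h => hw.2 (.inl h)⟩) hg rfl
    exact ⟨g', hg', fun w hw => (hg'g (.inl hw)).trans (hgf hw)⟩

end CubeComplex

section ParitySkeleton

/-- A perturbation of the identity of `ℝ` which preserves every interval `[n, n + 1]`, `n ∈ ℤ`, and
is constant on the `2 / 3`-neighbourhood of each even integer. In terms of `n = round (r / 2)` and
`s = r - 2 * n` its value is `2 * n + max 0 (3 * s - 2) + min 0 (3 * s + 2)`; the displacement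
`pushEven r - r` has period `2` in `r` and is written as a function of `θ = (s + 1) / 2`. -/
noncomputable def pushEven (r : ℝ) : ℝ :=
  r + ((fun θ : ℝ => max 0 (6 * θ - 5) + min 0 (6 * θ - 1) - (2 * θ - 1)) ∘ Int.fract)
    (r / 2 + 1 / 2)

lemma continuous_pushEven : Continuous pushEven := by
  have hperiodic : Continuous
      ((fun θ : ℝ => max 0 (6 * θ - 5) + min 0 (6 * θ - 1) - (2 * θ - 1)) ∘ Int.fract) :=
    ContinuousOn.comp_fract'' (by fun_prop) (by norm_num)
  exact continuous_id.add (hperiodic.comp (by fun_prop))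

lemma pushEven_two_mul_add {r s : ℝ} (hs : r = 2 * round (r / 2) + s) :
    pushEven r = 2 * round (r / 2) + (max 0 (3 * s - 2) + min 0 (3 * s + 2)) := by
  have hfract : Int.fract (r / 2 + 1 / 2) = (s + 1) / 2 := by
    rw [Int.fract, ← round_eq]
    linarith
  simp only [pushEven, Function.comp_apply, hfract]
  rw [show 6 * ((s + 1) / 2) - 5 = 3 * s - 2 by ring,
    show 6 * ((s + 1) / 2) - 1 = 3 * s + 2 by ring]
  linarith

lemma norm_coe_addCircle_two (r : ℝ) : ‖(r : AddCircle (2 : ℝ))‖ = |r - 2 * round (r / 2)| := by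
  rw [AddCircle.norm_eq, inv_mul_eq_div, mul_comm]

lemma exists_pushEven_eq {r : ℝ} (hr : ‖(r : AddCircle (2 : ℝ))‖ < 2 / 3) :
    ∃ k : ℤ, pushEven r = 2 * k := by
  rw [norm_coe_addCircle_two, abs_lt] at hr
  refine ⟨round (r / 2), ?_⟩
  rw [pushEven_two_mul_add (add_sub_cancel _ _).symm, max_eq_left (by linarith),
    min_eq_left (by linarith)]
  ring

lemma norm_coe_addCircle_two_le (r : ℝ) (k : ℤ) : ‖(r : AddCircle (2 : ℝ))‖ ≤ |r - 2 * k| := by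
  have hround := round_le (r / 2) k
  calc ‖(r : AddCircle (2 : ℝ))‖ = 2 * |r / 2 - round (r / 2)| := by
        rw [norm_coe_addCircle_two, ← abs_two, ← abs_mul, abs_two]
        ring_nf
    _ ≤ 2 * |r / 2 - k| := by gcongr
    _ = |r - 2 * k| := by
        rw [← abs_two, ← abs_mul, abs_two]
        ring_nf

lemma norm_coe_addCircle_two_lt_or (r : ℝ) :
    ‖(r : AddCircle (2 : ℝ))‖ < 2 / 3 ∨ ‖((r - 1 : ℝ) : AddCircle (2 : ℝ))‖ < 2 / 3 := by
  refine or_iff_not_imp_left.2 fun hfar => ?_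
  have hle := AddCircle.norm_le_half_period (2 : ℝ) (x := (r : AddCircle (2 : ℝ))) two_ne_zero
  rw [norm_coe_addCircle_two] at hfar hle
  rw [abs_two, div_self two_ne_zero] at hle
  obtain ⟨hge, hle⟩ := abs_le.1 hle
  rcases le_abs.1 (not_lt.1 hfar) with h | h
  · refine (norm_coe_addCircle_two_le _ (round (r / 2))).trans_lt (abs_lt.2 ?_)
    constructor <;> linarith
  · refine (norm_coe_addCircle_two_le _ (round (r / 2) - 1)).trans_lt (abs_lt.2 ?_)
    push_cast
    constructor <;> linarith

lemma mem_Icc_floor_ceil {r v : ℝ} {n : ℤ} (hr : r ∈ Icc (n : ℝ) (n + 1))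
    (hv : v ∈ Icc (n : ℝ) (n + 1)) (hn : r = n → v = n) (hn' : r = n + 1 → v = n + 1) :
    v ∈ Icc (⌊r⌋ : ℝ) ⌈r⌉ := by
  rcases hr.1.eq_or_lt with h | h
  · rw [hn h.symm, ← h, Int.floor_intCast, Int.ceil_intCast]
    exact ⟨le_rfl, le_rfl⟩
  rcases hr.2.eq_or_lt with h' | h'
  · rw [hn' h', h']
    exact ⟨Int.floor_le _, Int.le_ceil _⟩
  · have hfloor : ⌊r⌋ = n := Int.floor_eq_iff.2 ⟨hr.1, h'⟩
    have hceil : ⌈r⌉ = n + 1 := Int.ceil_eq_iff.2 ⟨by push_cast; linarith, by push_cast; exact hr.2⟩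
    rw [hfloor, hceil]
    exact_mod_cast hv

lemma pushEven_mem_Icc (r : ℝ) : pushEven r ∈ Icc (⌊r⌋ : ℝ) ⌈r⌉ := by
  obtain ⟨s, hs⟩ : ∃ s, r = 2 * round (r / 2) + s := ⟨_, (add_sub_cancel _ _).symm⟩
  have hs1 : |s| ≤ 1 := by
    have := abs_le.1 (abs_sub_round (r / 2))
    rw [abs_le]
    constructor <;> linarith
  have hpush := pushEven_two_mul_add hs
  rw [abs_le] at hs1
  rcases le_total 0 s with h | h
  · rw [min_eq_left (by linarith), add_zero] at hpush
    apply mem_Icc_floor_ceil (n := 2 * round (r / 2)) <;> push_cast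
    · constructor <;> linarith
    · rw [hpush]
      constructor
      · linarith [le_max_left 0 (3 * s - 2)]
      · linarith [max_le zero_le_one (show 3 * s - 2 ≤ 1 by linarith)]
    · intro h0
      rw [hpush, max_eq_left (by linarith), add_zero]
    · intro h1
      rw [hpush, max_eq_right (by linarith)]
      linarith
  · rw [max_eq_left (by linarith), zero_add] at hpush
    apply mem_Icc_floor_ceil (n := 2 * round (r / 2) - 1) <;> push_cast
    · constructor <;> linarith
    · rw [hpush]
      constructor
      · linarith [le_min (show (-1 : ℝ) ≤ 0 by norm_num) (show -1 ≤ 3 * s + 2 by linarith)]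
      · linarith [min_le_left 0 (3 * s + 2)]
    · intro h0
      rw [hpush, min_eq_right (by linarith)]
      linarith
    · intro h1
      rw [hpush, min_eq_left (by linarith)]
      ring

variable {ι : Type*} {c r : ℕ} {z w : ι → ℝ}

/-- The indices of the coordinates of `z` which are integers congruent to `c` modulo `2`. -/
def parityCoords (c : ℕ) (z : ι → ℝ) : Set ι :=
  {i | ∃ k : ℤ, z i = 2 * k + c}

/-- The union of all closed integer cells on which at least `r` coordinates are constant, equal to
integers congruent to `c` modulo `2`. -/
def paritySkeleton (ι : Type*) (c r : ℕ) : Set (ι → ℝ) :=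
  {z | r ≤ (parityCoords c z).ncard}

/-- The coordinatewise perturbation of the identity of `ℝ^ι` which is constant near integer
coordinates congruent to `c` modulo `2`. -/
noncomputable def pushParity (c : ℕ) (z : ι → ℝ) : ι → ℝ :=
  fun i => pushEven (z i - c) + c

/-- The indices of the coordinates of `z` within `2 / 3` of an integer congruent to `c` modulo
`2`. -/
def nearParityCoords (c : ℕ) (z : ι → ℝ) : Set ι :=
  {i | ‖((z i - c : ℝ) : AddCircle (2 : ℝ))‖ < 2 / 3}

lemma continuous_pushParity : Continuous (pushParity c : (ι → ℝ) → ι → ℝ) :=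
  continuous_pi fun i =>
    (continuous_pushEven.comp ((continuous_apply i).sub continuous_const)).add continuous_const

lemma pushParity_mem_carrier (c : ℕ) (z : ι → ℝ) : pushParity c z ∈ carrier z := by
  have hpush i := pushEven_mem_Icc (z i - c)
  simp only [Int.floor_sub_natCast, Int.ceil_sub_natCast, Int.cast_sub, Int.cast_natCast] at hpush
  exact ⟨fun i => sub_le_iff_le_add.1 (hpush i).1, fun i => le_sub_iff_add_le.1 (hpush i).2⟩

lemma nearParityCoords_subset : nearParityCoords c z ⊆ parityCoords c (pushParity c z) :=
  fun _ hi => (exists_pushEven_eq hi).imp fun _ hk => congrArg (· + (c : ℝ)) hk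

lemma parityCoords_subset (hw : w ∈ carrier z) : parityCoords c z ⊆ parityCoords c w :=
  fun _ ⟨k, hk⟩ => ⟨k, mod_cast eq_intCast_of_mem_carrier hw (n := 2 * k + c) (mod_cast hk)⟩

lemma disjoint_parityCoords_freeCoords : Disjoint (parityCoords c z) (freeCoords z) := by
  rw [disjoint_left]
  rintro i ⟨k, hk⟩ hi
  exact hi ⟨2 * k + c, by push_cast; exact hk.symm⟩

lemma union_nearParityCoords (z : ι → ℝ) : nearParityCoords 0 z ∪ nearParityCoords 1 z = univ :=
  eq_univ_of_forall fun i => by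
    simpa [nearParityCoords] using norm_coe_addCircle_two_lt_or (z i)

variable [Finite ι]

lemma isCubeComplex_paritySkeleton (c r : ℕ) : IsCubeComplex (paritySkeleton ι c r) :=
  fun _ hz _ hw => hz.trans (ncard_le_ncard (parityCoords_subset hw))

lemma carrierDim_add_le (hz : z ∈ paritySkeleton ι c r) : carrierDim z + r ≤ Nat.card ι := by
  calc carrierDim z + r ≤ (freeCoords z).ncard + (parityCoords c z).ncard :=
        Nat.add_le_add_left hz _
    _ = (freeCoords z ∪ parityCoords c z).ncard :=
        (ncard_union_eq disjoint_parityCoords_freeCoords.symm).symm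
    _ ≤ Nat.card ι := ncard_le_card _

lemma pushParity_mem_paritySkeleton (h : r ≤ (nearParityCoords c z).ncard) :
    pushParity c z ∈ paritySkeleton ι c r :=
  h.trans (ncard_le_ncard nearParityCoords_subset)

lemma isOpen_setOf_le_ncard_nearParityCoords (c r : ℕ) :
    IsOpen {z : ι → ℝ | r ≤ (nearParityCoords c z).ncard} := by
  have hopen (i : ι) : IsOpen {z : ι → ℝ | i ∈ nearParityCoords c z} :=
    isOpen_lt (continuous_norm.comp ((AddCircle.continuous_mk' 2).comp (by fun_prop)))
      continuous_const
  refine isOpen_iff_mem_nhds.2 fun z hz => ?_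
  have hstable := (Filter.eventually_all_finite (toFinite (nearParityCoords c z))).2
    fun i hi => (hopen i).mem_nhds hi
  filter_upwards [hstable] with w hw
  exact hz.trans (ncard_le_ncard hw)

lemma exists_pushParity_mem_paritySkeleton {a b : ℕ} (hab : a + b ≤ Nat.card ι + 1) :
    ∃ s : (ι → ℝ) → ℝ, Continuous s ∧ (∀ z, s z ≤ 1 → pushParity 0 z ∈ paritySkeleton ι 0 a) ∧
      ∀ z, 0 ≤ s z → pushParity 1 z ∈ paritySkeleton ι 1 b := by
  obtain ⟨τ, h0, h1, -⟩ := exists_continuous_zero_one_of_isClosed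
    (isOpen_setOf_le_ncard_nearParityCoords (ι := ι) 1 b).isClosed_compl
    (isOpen_setOf_le_ncard_nearParityCoords (ι := ι) 0 a).isClosed_compl <| by
      rw [disjoint_left]
      intro z hb ha
      have hunion := ncard_union_le (nearParityCoords 0 z) (nearParityCoords 1 z)
      rw [union_nearParityCoords, ncard_univ] at hunion
      simp only [mem_compl_iff, mem_ofPred_eq, not_le] at ha hb
      omega
  refine ⟨fun z => 3 * τ z - 1, by fun_prop, fun z hz => pushParity_mem_paritySkeleton ?_,
    fun z hz => pushParity_mem_paritySkeleton ?_⟩ <;> by_contra h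
  · linarith [show τ z = 1 from h1 h]
  · linarith [show τ z = 0 from h0 h]

end ParitySkeleton

namespace Join

variable {X Y W : Type*} [TopologicalSpace X] [TopologicalSpace Y] [TopologicalSpace W]

/-- The quotient map onto the join. -/
def mk (p : X × I × Y) : Join X Y := Quot.mk _ p

lemma isQuotientMap_mk : IsQuotientMap (mk : X × I × Y → Join X Y) :=
  isQuotientMap_quot_mk

/-- The point of the join with coordinates `x` and `y` and real parameter `s`, where `s` is clamped
to `[0, 1]`. -/
noncomputable def point (x : X) (s : ℝ) (y : Y) : Join X Y :=
  mk (x, projIcc 0 1 zero_le_one s, y)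

lemma point_coe (x : X) (t : I) (y : Y) : point x t y = mk (x, t, y) := by
  rw [point, projIcc_val]

lemma point_of_le_zero {s : ℝ} (hs : s ≤ 0) (x : X) (y y' : Y) : point x s y = point x 0 y' :=
  Quot.sound <| .inl
    ⟨projIcc_of_le_left zero_le_one hs, projIcc_of_le_left zero_le_one le_rfl, rfl⟩

lemma point_of_one_le {s : ℝ} (hs : 1 ≤ s) (x x' : X) (y : Y) : point x s y = point x' 1 y :=
  Quot.sound <| .inr
    ⟨projIcc_of_right_le zero_le_one hs, projIcc_of_right_le zero_le_one le_rfl, rfl⟩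

lemma point_congr {s : ℝ} {x x' : X} {y y' : Y} (hx : s < 1 → x = x') (hy : 0 < s → y = y') :
    point x s y = point x' s y' := by
  rcases le_or_gt s 0 with h0 | h0
  · rw [hx (h0.trans_lt one_pos), point_of_le_zero h0 x' y y', ← point_of_le_zero h0 x' y' y']
  rcases lt_or_ge s 1 with h1 | h1
  · rw [hx h1, hy h0]
  · rw [hy h0, point_of_one_le h1 x x', ← point_of_one_le h1 x' x']

lemma continuous_point : Continuous fun p : X × ℝ × Y => point p.1 p.2.1 p.2.2 :=
  isQuotientMap_mk.continuous.comp (continuous_fst.prodMk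
    ((continuous_projIcc.comp continuous_snd.fst).prodMk continuous_snd.snd))

lemma continuousOn_point {D : Set W} {s : W → ℝ} {x : W → X} {y : W → Y} (hs : ContinuousOn s D)
    (hx : ContinuousOn x (D ∩ {w | s w ≤ 1})) (hy : ContinuousOn y (D ∩ {w | 0 ≤ s w})) :
    ContinuousOn (fun w => point (x w) (s w) (y w)) D := by
  rcases D.eq_empty_or_nonempty with rfl | ⟨w₀, -⟩
  · exact continuousOn_empty _
  have hmid : ContinuousOn (fun w => point (x w) (s w) (y w)) (D ∩ {w | 0 ≤ s w} ∩ {w | s w ≤ 1}) :=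
    continuous_point.comp_continuousOn <|
      (hx.mono fun _ hw => ⟨hw.1.1, hw.2⟩).prodMk <|
        (hs.mono fun _ hw => hw.1.1).prodMk (hy.mono inter_subset_left)
  have hleft : ContinuousOn (fun w => point (x w) 0 (y w₀)) (D ∩ {w | s w ≤ 0}) :=
    continuous_point.comp_continuousOn <|
      (hx.mono fun _ hw => ⟨hw.1, le_trans (α := ℝ) hw.2 zero_le_one⟩).prodMk <|
        continuousOn_const.prodMk continuousOn_const
  have hright : ContinuousOn (fun w => point (x w₀) 1 (y w)) (D ∩ {w | 0 ≤ s w} ∩ {w | 1 ≤ s w}) :=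
    continuous_point.comp_continuousOn <| continuousOn_const.prodMk <|
      continuousOn_const.prodMk (hy.mono inter_subset_left)
  have hnonneg := continuousOn_if_le (hs.mono inter_subset_left) continuousOn_const hmid hright
    fun w _ hw => point_of_one_le hw.ge _ _ _
  refine (continuousOn_if_le hs continuousOn_const hleft hnonneg fun w _ hw => ?_).congr
    fun w _ => ?_
  · simp only [hw, zero_le_one, if_true, point_of_le_zero le_rfl (x w) (y w) (y w₀)]
  · dsimp only
    split_ifs with h0 h1
    · exact point_of_le_zero h0 _ _ _
    · rfl
    · exact point_of_one_le (not_le.1 h1).le _ _ _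

/-- The parameter in `[0, 1]` of a point of the join. -/
def param : Join X Y → ℝ :=
  Quot.lift (fun p => (p.2.1 : ℝ)) <| by
    rintro p q (⟨hp, hq, -⟩ | ⟨hp, hq, -⟩) <;> rw [hp, hq]

open Classical in
/-- The `X`-coordinate of a point of the join, which takes the default value `x₀` at parameter
`1`. -/
noncomputable def fst (x₀ : X) : Join X Y → X :=
  Quot.lift (fun p => if p.2.1 = 1 then x₀ else p.1) <| by
    rintro p q (⟨hp, hq, h⟩ | ⟨hp, hq, -⟩) <;> simp only [hp, hq, if_true]
    rw [h]

open Classical in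
/-- The `Y`-coordinate of a point of the join, which takes the default value `y₀` at parameter
`0`. -/
noncomputable def snd (y₀ : Y) : Join X Y → Y :=
  Quot.lift (fun p => if p.2.1 = 0 then y₀ else p.2.2) <| by
    rintro p q (⟨hp, hq, -⟩ | ⟨hp, hq, h⟩) <;> simp only [hp, hq, if_true]
    rw [h]

lemma param_mk (p : X × I × Y) : param (mk p) = p.2.1 := rfl

lemma fst_mk (x₀ : X) {p : X × I × Y} (hp : p.2.1 ≠ 1) : fst x₀ (mk p) = p.1 := if_neg hp

lemma snd_mk (y₀ : Y) {p : X × I × Y} (hp : p.2.1 ≠ 0) : snd y₀ (mk p) = p.2.2 := if_neg hp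

lemma continuous_param : Continuous (param : Join X Y → ℝ) :=
  isQuotientMap_mk.continuous_iff.2 (continuous_subtype_val.comp continuous_snd.fst)

protected lemma continuousOn_fst (x₀ : X) :
    ContinuousOn (fst x₀ : Join X Y → X) {j | param j < 1} := by
  rw [isQuotientMap_mk.continuousOn_isOpen_iff (isOpen_lt continuous_param continuous_const)]
  refine continuous_fst.continuousOn.congr fun p (hp : (p.2.1 : ℝ) < 1) => fst_mk x₀ ?_
  exact fun h => hp.ne (congrArg Subtype.val h)

protected lemma continuousOn_snd (y₀ : Y) :
    ContinuousOn (snd y₀ : Join X Y → Y) {j | 0 < param j} := by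
  rw [isQuotientMap_mk.continuousOn_isOpen_iff (isOpen_lt continuous_const continuous_param)]
  refine continuous_snd.snd.continuousOn.congr fun p (hp : 0 < (p.2.1 : ℝ)) => snd_mk y₀ ?_
  exact fun h => hp.ne' (congrArg Subtype.val h)

/-- A homotopy, indexed by the second component, from the identity of the join to the map which
stretches the middle third of the parameter interval to the whole interval. -/
noncomputable def stretch (x₀ : X) (y₀ : Y) (p : Join X Y × I) : Join X Y :=
  point (fst x₀ p.1) (param p.1 + p.2 * (2 * param p.1 - 1)) (snd y₀ p.1)

lemma stretch_mk (x₀ : X) (y₀ : Y) (p : X × I × Y) (u : I) :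
    stretch x₀ y₀ (mk p, u) = point p.1 (p.2.1 + u * (2 * p.2.1 - 1)) p.2.2 := by
  refine point_congr (fun h => fst_mk x₀ fun hp => ?_) fun h => snd_mk y₀ fun hp => ?_
  · simp only [param_mk, hp, Icc.coe_one] at h
    linarith [u.2.1]
  · simp only [param_mk, hp, Icc.coe_zero] at h
    linarith [u.2.1]

lemma continuous_stretch (x₀ : X) (y₀ : Y) : Continuous (stretch x₀ y₀) := by
  refine isQuotientMap_mk.continuous_lift_prod_left ?_
  simp only [stretch_mk]
  exact continuous_point.comp (f := fun q : (X × I × Y) × I =>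
    (q.1.1, (q.1.2.1 : ℝ) + q.2 * (2 * q.1.2.1 - 1), q.1.2.2)) (by fun_prop)

lemma stretch_zero (x₀ : X) (y₀ : Y) (j : Join X Y) : stretch x₀ y₀ (j, 0) = j := by
  obtain ⟨p, rfl⟩ := isQuotientMap_mk.surjective j
  rw [stretch_mk, Icc.coe_zero, zero_mul, add_zero, point_coe]

lemma stretch_one (x₀ : X) (y₀ : Y) (j : Join X Y) :
    stretch x₀ y₀ (j, 1) = point (fst x₀ j) (3 * param j - 1) (snd y₀ j) := by
  rw [stretch, Icc.coe_one]
  congr 1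
  ring

end Join

namespace Join

variable {X Y E : Type*} [TopologicalSpace X] [TopologicalSpace Y]
  [NormedAddCommGroup E] [NormedSpace ℝ E] {R : ℝ} {s t : E → ℝ} {x : E → X} {y : E → Y}

lemma extendsOver_point_of_param (hR : 0 < R) (hs : ContinuousOn s (sphere 0 R))
    (ht : ContinuousOn t (closedBall 0 R))
    (hx : ContinuousOn x ({z ∈ sphere 0 R | s z ≤ 1} ∪ {z ∈ closedBall 0 R | t z ≤ 1}))
    (hy : ContinuousOn y ({z ∈ sphere 0 R | 0 ≤ s z} ∪ {z ∈ closedBall 0 R | 0 ≤ t z})) :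
    ExtendsOver (fun z => point (x z) (s z) (y z)) (sphere 0 R) (closedBall 0 R) := by
  have hsub : sphere (0 : E) R ⊆ closedBall 0 R := sphere_subset_closedBall
  refine .of_homotopy hR (ψ := fun z => point (x z) (t z) (y z))
    (fun p => point (x p.1) (AffineMap.lineMap (s p.1) (t p.1) (p.2 : ℝ)) (y p.1))
    (continuousOn_point ?_ (hx.comp continuousOn_fst ?_) (hy.comp continuousOn_fst ?_))
    (fun z _ => by simp) (fun z _ => by simp)
    ⟨_, continuousOn_point ht (hx.mono subset_union_right) (hy.mono subset_union_right),
      fun _ _ => rfl⟩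
  · exact (hs.comp continuousOn_fst fun p hp => hp.1).lineMap
      (ht.comp continuousOn_fst fun p hp => hsub hp.1) (by fun_prop)
  · rintro ⟨z, u⟩ ⟨⟨hz, -⟩, hu⟩
    by_contra hout
    simp only [mem_union, mem_ofPred_eq, hz, hsub hz, true_and, not_or, not_le] at hout
    exact not_le.2 (mem_Ioi.1 ((convex_Ioi (1 : ℝ)).lineMap_mem hout.1 hout.2 u.2)) hu
  · rintro ⟨z, u⟩ ⟨⟨hz, -⟩, hu⟩
    by_contra hout
    simp only [mem_union, mem_ofPred_eq, hz, hsub hz, true_and, not_or, not_le] at hout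
    exact not_le.2 (mem_Iio.1 ((convex_Iio (0 : ℝ)).lineMap_mem hout.1 hout.2 u.2)) hu

lemma extendsOver_point_of_segment (hR : 0 < R) (hs : ContinuousOn s (sphere 0 R)) {P Q : Set E}
    (hx : ContinuousOn x P) (hy : ContinuousOn y Q) {e o : E → E} (he : Continuous e)
    (ho : Continuous o) (heP : ∀ z ∈ sphere 0 R, s z ≤ 1 → segment ℝ z (e z) ⊆ P)
    (hoQ : ∀ z ∈ sphere 0 R, 0 ≤ s z → segment ℝ z (o z) ⊆ Q)
    (h : ExtendsOver (fun z => point (x (e z)) (s z) (y (o z))) (sphere 0 R) (closedBall 0 R)) :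
    ExtendsOver (fun z => point (x z) (s z) (y z)) (sphere 0 R) (closedBall 0 R) := by
  have hslide {f : E → E} (hf : Continuous f) :
      Continuous fun p : E × I => AffineMap.lineMap (k := ℝ) p.1 (f p.1) (p.2 : ℝ) := by
    simp only [AffineMap.lineMap_apply_module']
    fun_prop
  refine .of_homotopy hR (fun p => point (x (AffineMap.lineMap p.1 (e p.1) (p.2 : ℝ))) (s p.1)
      (y (AffineMap.lineMap p.1 (o p.1) (p.2 : ℝ))))
    (continuousOn_point (hs.comp continuousOn_fst fun p hp => hp.1)
      (hx.comp (hslide he).continuousOn fun p hp => ?_)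
      (hy.comp (hslide ho).continuousOn fun p hp => ?_))
    (fun z _ => by simp) (fun z _ => by simp) h
  · exact heP p.1 hp.1.1 hp.2 (lineMap_mem_segment ℝ _ _ p.2.2)
  · exact hoQ p.1 hp.1.1 hp.2 (lineMap_mem_segment ℝ _ _ p.2.2)

end Join

lemma IsCubeComplex.extendsOver_paritySkeleton {ι X : Type*} [Fintype ι] [TopologicalSpace X]
    {P : Set (ι → ℝ)} (hP : IsCubeComplex P) {M p r : ℕ} (hPM : P ⊆ closedBall 0 M)
    (hr : Nat.card ι ≤ p + r) (hX : ∀ j ≤ p, SphereMapsExtend j X) (c : ℕ) {f : (ι → ℝ) → X}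
    (hf : ContinuousOn f P) : ExtendsOver f P (P ∪ closedBall 0 M ∩ paritySkeleton ι c r) := by
  refine (hP.union ((isCubeComplex_closedBall M).inter
    (isCubeComplex_paritySkeleton c r))).extendsOver ?_ hP subset_union_left ?_ hf
  · exact isBounded_closedBall.subset (union_subset hPM inter_subset_left)
  · rintro z ⟨hz | ⟨-, hz⟩, hzP⟩
    · exact absurd hz hzP
    · have := carrierDim_add_le hz
      exact hX _ (by omega)

namespace Join

variable {ι X Y : Type*} [Fintype ι] [TopologicalSpace X] [TopologicalSpace Y] {M p q : ℕ}

lemma extendsOver_point_of_isCubeComplex (hM : 0 < M) (hι : Nat.card ι ≤ p + q + 1)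
    (hX : ∀ j ≤ p, SphereMapsExtend j X) (hY : ∀ j ≤ q, SphereMapsExtend j Y)
    {s : (ι → ℝ) → ℝ} {x : (ι → ℝ) → X} {y : (ι → ℝ) → Y} {P Q : Set (ι → ℝ)}
    (hP : IsCubeComplex P) (hQ : IsCubeComplex Q) (hPM : P ⊆ closedBall 0 M)
    (hQM : Q ⊆ closedBall 0 M) (hs : ContinuousOn s (sphere 0 M)) (hx : ContinuousOn x P)
    (hy : ContinuousOn y Q) (hsP : ∀ z ∈ sphere 0 (M : ℝ), s z ≤ 1 → z ∈ P)
    (hsQ : ∀ z ∈ sphere 0 (M : ℝ), 0 ≤ s z → z ∈ Q) :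
    ExtendsOver (fun z => point (x z) (s z) (y z)) (sphere 0 M) (closedBall 0 M) := by
  have hMR : (0 : ℝ) < M := Nat.cast_pos.2 hM
  let a := Nat.card ι - p
  let b := Nat.card ι + 1 - a
  obtain ⟨x', hx', hxx'⟩ := hP.extendsOver_paritySkeleton (r := a) hPM (by omega) hX 0 hx
  obtain ⟨y', hy', hyy'⟩ := hQ.extendsOver_paritySkeleton (r := b) hQM (by omega) hY 1 hy
  obtain ⟨t, ht, ht0, ht1⟩ := exists_pushParity_mem_paritySkeleton (ι := ι) (a := a) (b := b)
    (by omega)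
  have hpush (c : ℕ) {z : ι → ℝ} (hz : z ∈ closedBall 0 (M : ℝ)) :
      pushParity c z ∈ closedBall 0 (M : ℝ) :=
    isCubeComplex_closedBall M z hz (pushParity_mem_carrier c z)
  have hsegment (c : ℕ) (z : ι → ℝ) : segment ℝ z (pushParity c z) ⊆ carrier z :=
    (convex_Icc _ _).segment_subset (mem_carrier_self z) (pushParity_mem_carrier c z)
  have hpushed : ExtendsOver (fun z => point (x' (pushParity 0 z)) (s z) (y' (pushParity 1 z)))
      (sphere 0 M) (closedBall 0 M) := by
    refine extendsOver_point_of_param hMR hs ht.continuousOn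
      (hx'.comp continuous_pushParity.continuousOn ?_)
      (hy'.comp continuous_pushParity.continuousOn ?_)
    · rintro z (⟨hz, hsz⟩ | ⟨hz, htz⟩)
      · exact .inl (hP z (hsP z hz hsz) (pushParity_mem_carrier 0 z))
      · exact .inr ⟨hpush 0 hz, ht0 z htz⟩
    · rintro z (⟨hz, hsz⟩ | ⟨hz, htz⟩)
      · exact .inl (hQ z (hsQ z hz hsz) (pushParity_mem_carrier 1 z))
      · exact .inr ⟨hpush 1 hz, ht1 z htz⟩
  refine (extendsOver_point_of_segment hMR hs (hx'.mono subset_union_left)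
    (hy'.mono subset_union_left) continuous_pushParity continuous_pushParity
    (fun z hz hsz => (hsegment 0 z).trans (hP z (hsP z hz hsz)))
    (fun z hz hsz => (hsegment 1 z).trans (hQ z (hsQ z hz hsz))) hpushed).congr fun z hz => ?_
  exact point_congr (fun h => hxx' (hsP z hz h.le)) fun h => hyy' (hsQ z hz h.le)

lemma extendsOver_of_param_lt_third (x₀ : X) (y₀ : Y) (hM : 0 < M) (hι : Nat.card ι ≤ p + q + 1)
    (hX : ∀ j ≤ p, SphereMapsExtend j X) (hY : ∀ j ≤ q, SphereMapsExtend j Y)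
    {φ : (ι → ℝ) → Join X Y} (hφ : ContinuousOn φ (sphere 0 M))
    (hfine : ∀ z ∈ sphere 0 (M : ℝ), ∀ w ∈ carrier z, |param (φ w) - param (φ z)| < 1 / 3) :
    ExtendsOver φ (sphere 0 M) (closedBall 0 M) := by
  have hsphere : IsCubeComplex (sphere (0 : ι → ℝ) M) := isCubeComplex_sphere hM
  have hparam : ContinuousOn (fun z => param (φ z)) (sphere 0 M) :=
    continuous_param.comp_continuousOn hφ
  let region (T : Set ℝ) : Set (ι → ℝ) := {z ∈ sphere 0 (M : ℝ) | ∀ w ∈ carrier z, param (φ w) ∈ T}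
  have hcomplex (T : Set ℝ) : IsCubeComplex (region T) := fun z hz w hw =>
    ⟨hsphere z hz.1 hw, fun u hu => hz.2 u (carrier_subset_carrier hw hu)⟩
  have hball (T : Set ℝ) : region T ⊆ closedBall 0 M := fun z hz => sphere_subset_closedBall hz.1
  have hmem (T : Set ℝ) : MapsTo φ (region T) {j | param j ∈ T} := fun z hz =>
    hz.2 z (mem_carrier_self z)
  refine .of_homotopy (Nat.cast_pos.2 hM) (fun p => stretch x₀ y₀ (φ p.1, p.2))
    ((continuous_stretch x₀ y₀).comp_continuousOn
      ((hφ.comp continuousOn_fst fun p hp => hp.1).prodMk continuousOn_snd))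
    (fun z _ => stretch_zero x₀ y₀ _) (fun z _ => stretch_one x₀ y₀ _) ?_
  refine extendsOver_point_of_isCubeComplex hM hι hX hY (hcomplex (Iio 1)) (hcomplex (Ioi 0))
    (hball _) (hball _) (by fun_prop)
    ((Join.continuousOn_fst x₀).comp (hφ.mono fun z hz => hz.1) (hmem _))
    ((Join.continuousOn_snd y₀).comp (hφ.mono fun z hz => hz.1) (hmem _))
    (fun z hz hs => ⟨hz, fun w hw => ?_⟩) (fun z hz hs => ⟨hz, fun w hw => ?_⟩)
  · have := abs_lt.1 (hfine z hz w hw)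
    rw [mem_Iio]
    linarith
  · have := abs_lt.1 (hfine z hz w hw)
    rw [mem_Ioi]
    linarith

end Join

theorem SphereMapsExtend.join {X Y : Type*} [TopologicalSpace X] [TopologicalSpace Y]
    (x₀ : X) (y₀ : Y) {p q d : ℕ} (hX : ∀ j ≤ p, SphereMapsExtend j X)
    (hY : ∀ j ≤ q, SphereMapsExtend j Y) (hd : d ≤ p + q + 1) :
    SphereMapsExtend d (Join X Y) := by
  intro f hf
  obtain ⟨δ, hδ, hfine⟩ := Metric.uniformContinuousOn_iff.1
    ((isCompact_sphere 0 1).uniformContinuousOn_of_continuous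
      (Join.continuous_param.comp_continuousOn hf)) (1 / 3) (by norm_num)
  obtain ⟨k, hk⟩ := exists_nat_one_div_lt hδ
  rw [← Nat.cast_add_one] at hk
  have hM : (0 : ℝ) < (k + 1 : ℕ) := Nat.cast_pos.2 k.succ_pos
  have hunscale := mapsTo_inv_smul_sphere (E := Fin d → ℝ) hM
  refine .of_inv_smul hM (Join.extendsOver_of_param_lt_third x₀ y₀ k.succ_pos
    (by rwa [Nat.card_fin]) hX hY (hf.comp (by fun_prop) hunscale) fun z hz w hw => ?_)
  refine hfine _ (hunscale (isCubeComplex_sphere k.succ_pos z hz hw)) _ (hunscale hz) ?_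
  calc dist (((k + 1 : ℕ) : ℝ)⁻¹ • w) (((k + 1 : ℕ) : ℝ)⁻¹ • z) = ‖w - z‖ / (k + 1 : ℕ) := by
        rw [dist_eq_norm, ← smul_sub, norm_smul_of_nonneg (inv_nonneg.2 hM.le), inv_mul_eq_div]
    _ ≤ 1 / (k + 1 : ℕ) := by gcongr; exact norm_sub_le_one_of_mem_carrier hw
    _ < δ := hk

lemma sphereMapsExtend_of_le {X : Type*} [TopologicalSpace X] {p : ℕ}
    (h : ∀ x : X, ∀ i < p, Subsingleton (π_ i X x)) : ∀ j ≤ p, SphereMapsExtend j X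
  | 0, _ => sphereMapsExtend_zero
  | i + 1, hi => sphereMapsExtend_succ fun x => h x i hi

theorem stmt8_general {X Y : Type*} [TopologicalSpace X] [TopologicalSpace Y] {p q : ℕ}
    (hX : ∀ x : X, ∀ i < p, Subsingleton (π_ i X x))
    (hY : ∀ y : Y, ∀ i < q, Subsingleton (π_ i Y y)) :
    ∀ j : Join X Y, ∀ i < p + q + 1, Subsingleton (π_ i (Join X Y) j) := by
  intro j i hi
  obtain ⟨⟨x₀, -, y₀⟩, -⟩ := Join.isQuotientMap_mk.surjective j
  have hjoin : SphereMapsExtend (i + 1) (Join X Y) :=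
    .join x₀ y₀ (sphereMapsExtend_of_le hX) (sphereMapsExtend_of_le hY) hi
  exact hjoin.subsingleton_homotopyGroup j

/-- The join of an `m`-connected space and an `n`-connected space is `(m+n+2)`-connected. -/
theorem stmt8 (m n : ℕ) (X Y : Type*) [TopologicalSpace X] [TopologicalSpace Y]
    (hX : IsNConnected m X) (hY : IsNConnected n Y) :
    IsNConnected (m + n + 2) (Join X Y) := by
  obtain ⟨⟨⟨x₀⟩, hX⟩, ⟨y₀⟩, hY⟩ := And.intro hX hY
  exact ⟨⟨Join.mk (x₀, 0, y₀)⟩, fun j i hi => stmt8_general (p := m + 1) (q := n + 1)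
    (fun x i hi => hX x i (by omega)) (fun y i hi => hY y i (by omega)) j i (by omega)⟩
end
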